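/- arXiv:2207.06468 — 6 statements merged into one kernel-verified Lean document; each statement's English description precedes it below -/
import Mathlib

section
/- Let α ∈ (0,1), let X be a complex Banach space, let (λₙ)_{n≥1} be a strictly increasing sequence of positive real numbers with λₙ → +∞, and let (cₙ)_{n≥1} be a sequence in X with ∑ₙ ‖cₙ‖/λₙ² < ∞. Set 𝒪 := ℂ ∖ ({−λₙ : n ≥ 1} ∪ {−e^{2iαπ}λₙ : n ≥ 1}). Assume there exist real numbers 0 < r₁ < r₂ such that the interval (r₁, r₂) is contained in 𝒪 and ∑ₙ cₙ/((λₙ + z)(λₙ + e^{−2iαπ}z)) = 0 for every real z ∈ (r₁, r₂). Then cₙ = 0 for every n ≥ 1. -/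
open Complex Set Filter

/-!
Up to finitely many indices, the terms of the series are dominated, locally uniformly in `z`, by
`4‖cₙ‖/λₙ²`. The series is therefore meromorphic on all of `ℂ`, and the identity theorem spreads
its vanishing from the interval to a punctured neighbourhood of each `-λₖ`. No other denominator
vanishes at `-λₖ`, so the product of the series with `(λₖ + z)(λₖ + e^{-2iαπ}z)` tends to `cₖ`
there.
-/

open scoped Topology

theorem frequently_nhdsNE_ofReal_of_forall_mem_Ioo {p : ℂ → Prop} {r₁ r₂ x : ℝ}
    (hx : x ∈ Ioo r₁ r₂) (h : ∀ t ∈ Ioo r₁ r₂, p (t : ℂ)) : ∃ᶠ z in 𝓝[≠] (x : ℂ), p z := by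
  have hofReal : Tendsto ((↑) : ℝ → ℂ) (𝓝[≠] x) (𝓝[≠] (x : ℂ)) :=
    continuous_ofReal.continuousAt.continuousWithinAt.tendsto_nhdsWithin
      fun _ ht => ofReal_injective.ne ht
  have hreal : ∀ᶠ t : ℝ in 𝓝[≠] x, p t :=
    eventually_nhdsWithin_of_eventually_nhds (eventually_of_mem (Ioo_mem_nhds hx.1 hx.2) h)
  exact hofReal.frequently hreal.frequently

theorem eventuallyEq_zero_nhdsNE_of_frequently_eq_zero {𝕜 E : Type*} [NontriviallyNormedField 𝕜]
    [NormedAddCommGroup E] [NormedSpace 𝕜 E] {f : 𝕜 → E} {U : Set 𝕜} (hf : MeromorphicOn f U)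
    (hU : IsPreconnected U) {z₀ z : 𝕜} (hz₀ : z₀ ∈ U) (hz : z ∈ U)
    (hfz₀ : ∃ᶠ x in 𝓝[≠] z₀, f x = 0) : f =ᶠ[𝓝[≠] z] 0 := by
  have horder : meromorphicOrderAt f z₀ = ⊤ :=
    meromorphicOrderAt_eq_top_iff.2 ((hf z₀ hz₀).frequently_zero_iff_eventuallyEq_zero.1 hfz₀)
  refine meromorphicOrderAt_eq_top_iff.1 ?_
  by_contra hne
  exact hf.meromorphicOrderAt_ne_top_of_isPreconnected hU hz hz₀ hne horder

/-- The denominator `(a + z)(a + wz)` of a term of the jump series; in the application `a = λₙ` and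
`w = e^{-2iαπ}`. -/
def jumpDenom (w a z : ℂ) : ℂ :=
  (a + z) * (a + w * z)

section Denominator

variable {w a z : ℂ}

theorem jumpDenom_neg_self : jumpDenom w a (-a) = 0 := by
  simp [jumpDenom]

theorem jumpDenom_neg_ne_zero_of_norm_ne {b : ℂ} (hw : ‖w‖ = 1) (hab : ‖a‖ ≠ ‖b‖) :
    jumpDenom w a (-b) ≠ 0 := by
  refine mul_ne_zero (fun h => hab ?_) (fun h => hab ?_)
  · rw [eq_neg_of_add_eq_zero_left h, neg_neg]
  · rw [eq_neg_of_add_eq_zero_left h, norm_neg, norm_mul, hw, one_mul, norm_neg]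

theorem differentiable_jumpDenom : Differentiable ℂ (jumpDenom w a) := by
  unfold jumpDenom
  fun_prop

theorem eventually_nhdsNE_jumpDenom_ne_zero (hw : w ≠ 0) : ∀ᶠ x in 𝓝[≠] z, jumpDenom w a x ≠ 0 := by
  have hfinite : {x | jumpDenom w a x = 0}.Finite := by
    refine (Set.toFinite {-a, -a / w}).subset fun x hx => ?_
    rcases mul_eq_zero.1 hx with h | h
    · exact Or.inl (eq_neg_of_add_eq_zero_right h)
    · exact Or.inr ((eq_div_iff hw).2 (by linear_combination h))
  exact nhdsNE_le_cofinite z hfinite.compl_mem_cofinite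

theorem sq_norm_div_four_le_norm_jumpDenom (hz : 2 * ‖z‖ ≤ ‖a‖) (hwz : 2 * ‖w * z‖ ≤ ‖a‖) :
    ‖a‖ ^ 2 / 4 ≤ ‖jumpDenom w a z‖ := by
  have half_le {u : ℂ} (hu : 2 * ‖u‖ ≤ ‖a‖) : ‖a‖ / 2 ≤ ‖a + u‖ := by
    linarith [norm_sub_le_norm_add a u]
  calc ‖a‖ ^ 2 / 4 = (‖a‖ / 2) * (‖a‖ / 2) := by ring
    _ ≤ ‖a + z‖ * ‖a + w * z‖ := by gcongr <;> apply half_le <;> assumption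
    _ = ‖jumpDenom w a z‖ := (norm_mul _ _).symm

end Denominator

/-- The jump series `∑ₙ cₙ/((aₙ + z)(aₙ + wz))`. At a zero of one of the denominators the
corresponding term is `0`. -/
noncomputable def jumpSeries {ι X : Type*} [NormedAddCommGroup X] [NormedSpace ℂ X]
    (w : ℂ) (a : ι → ℂ) (c : ι → X) (z : ℂ) : X :=
  ∑' n, (jumpDenom w (a n) z)⁻¹ • c n

section Series

variable {ι X : Type*} [NormedAddCommGroup X] [NormedSpace ℂ X] {w : ℂ} {a : ι → ℂ} {c : ι → X}

theorem eventually_cofinite_sq_norm_div_four_le_norm_jumpDenom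
    (ha : Tendsto (fun n => ‖a n‖) cofinite atTop) (w : ℂ) (R : ℝ) :
    ∀ᶠ n in cofinite, 0 < ‖a n‖ ∧
      ∀ z ∈ Metric.ball (0 : ℂ) R, ‖a n‖ ^ 2 / 4 ≤ ‖jumpDenom w (a n) z‖ := by
  filter_upwards [ha.eventually_gt_atTop 0, ha.eventually_ge_atTop (2 * R),
    ha.eventually_ge_atTop (2 * (‖w‖ * R))] with n hpos hR hwR
  refine ⟨hpos, fun z hz => ?_⟩
  have hzR : ‖z‖ ≤ R := (mem_ball_zero_iff.1 hz).le
  have hwzR : ‖w * z‖ ≤ ‖w‖ * R := by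
    rw [norm_mul]
    gcongr
  exact sq_norm_div_four_le_norm_jumpDenom (by linarith) (by linarith)

theorem eventually_cofinite_jumpDenom_ne_zero
    (ha : Tendsto (fun n => ‖a n‖) cofinite atTop) (w : ℂ) (R : ℝ) :
    ∀ᶠ n in cofinite, ∀ z ∈ Metric.ball (0 : ℂ) R, jumpDenom w (a n) z ≠ 0 := by
  filter_upwards [eventually_cofinite_sq_norm_div_four_le_norm_jumpDenom ha w R]
    with n ⟨hpos, hle⟩ z hz
  exact norm_pos_iff.1 (lt_of_lt_of_le (by positivity) (hle z hz))

theorem eventually_cofinite_norm_inv_jumpDenom_smul_le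
    (ha : Tendsto (fun n => ‖a n‖) cofinite atTop) (w : ℂ) (c : ι → X) (R : ℝ) :
    ∀ᶠ n in cofinite, ∀ z ∈ Metric.ball (0 : ℂ) R,
      ‖(jumpDenom w (a n) z)⁻¹ • c n‖ ≤ 4 * (‖c n‖ / ‖a n‖ ^ 2) := by
  filter_upwards [eventually_cofinite_sq_norm_div_four_le_norm_jumpDenom ha w R]
    with n ⟨hpos, hle⟩ z hz
  calc ‖(jumpDenom w (a n) z)⁻¹ • c n‖ = ‖jumpDenom w (a n) z‖⁻¹ * ‖c n‖ := by
        rw [norm_smul, norm_inv]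
    _ ≤ (‖a n‖ ^ 2 / 4)⁻¹ * ‖c n‖ := by
        gcongr
        exact hle z hz
    _ = 4 * (‖c n‖ / ‖a n‖ ^ 2) := by field_simp

theorem eventually_nhds_forall_jumpDenom_ne_zero
    (ha : Tendsto (fun n => ‖a n‖) cofinite atTop) {z₀ : ℂ}
    (hz₀ : ∀ n, jumpDenom w (a n) z₀ ≠ 0) :
    ∀ᶠ z in 𝓝 z₀, ∀ n, jumpDenom w (a n) z ≠ 0 := by
  have hball : Metric.ball (0 : ℂ) (‖z₀‖ + 1) ∈ 𝓝 z₀ :=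
    Metric.isOpen_ball.mem_nhds (by simp)
  have hfinite := eventually_cofinite.1 (eventually_cofinite_jumpDenom_ne_zero ha w (‖z₀‖ + 1))
  have hexceptional := (eventually_all_finite hfinite).2 fun n _ =>
    differentiable_jumpDenom.continuous.continuousAt.eventually_ne (hz₀ n)
  filter_upwards [hball, hexceptional] with z hz hne n
  by_cases hn : ∀ x ∈ Metric.ball (0 : ℂ) (‖z₀‖ + 1), jumpDenom w (a n) x ≠ 0
  · exact hn z hz
  · exact hne n hn

variable [CompleteSpace X]

theorem summable_inv_jumpDenom_smul (ha : Tendsto (fun n => ‖a n‖) cofinite atTop)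
    (hc : Summable fun n => ‖c n‖ / ‖a n‖ ^ 2) (w z : ℂ) :
    Summable fun n => (jumpDenom w (a n) z)⁻¹ • c n := by
  refine (hc.mul_left 4).of_norm_bounded_eventually ?_
  filter_upwards [eventually_cofinite_norm_inv_jumpDenom_smul_le ha w c (‖z‖ + 1)] with n hn
  exact hn z (by simp)

theorem jumpSeries_eq_sum_add (ha : Tendsto (fun n => ‖a n‖) cofinite atTop)
    (hc : Summable fun n => ‖c n‖ / ‖a n‖ ^ 2) (w : ℂ) (s : Finset ι) (z : ℂ) :
    jumpSeries w a c z = ∑ n ∈ s, (jumpDenom w (a n) z)⁻¹ • c n +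
      jumpSeries w (fun n : {n // n ∉ s} => a n) (fun n => c n) z :=
  ((summable_inv_jumpDenom_smul ha hc w z).sum_add_tsum_subtype_compl s).symm

theorem analyticAt_jumpSeries (ha : Tendsto (fun n => ‖a n‖) cofinite atTop)
    (hc : Summable fun n => ‖c n‖ / ‖a n‖ ^ 2) {z₀ : ℂ}
    (hz₀ : ∀ n, jumpDenom w (a n) z₀ ≠ 0) : AnalyticAt ℂ (jumpSeries w a c) z₀ := by
  have hball : Metric.ball (0 : ℂ) (‖z₀‖ + 1) ∈ 𝓝 z₀ :=
    Metric.isOpen_ball.mem_nhds (by simp)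
  obtain ⟨U, hU, hUopen, hz₀U⟩ := eventually_nhds_iff.1
    ((eventually_nhds_forall_jumpDenom_ne_zero ha hz₀).and hball)
  have huniform : TendstoUniformlyOn
      (fun (s : Finset ι) z => ∑ n ∈ s, (jumpDenom w (a n) z)⁻¹ • c n)
      (jumpSeries w a c) atTop U := by
    refine tendstoUniformlyOn_tsum_of_cofinite_eventually (hc.mul_left 4) ?_
    filter_upwards [eventually_cofinite_norm_inv_jumpDenom_smul_le ha w c (‖z₀‖ + 1)]
      with n hn z hz
    exact hn z (hU z hz).2
  have hpartial (s : Finset ι) :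
      DifferentiableOn ℂ (fun z => ∑ n ∈ s, (jumpDenom w (a n) z)⁻¹ • c n) U :=
    DifferentiableOn.fun_sum fun n _ =>
      (differentiable_jumpDenom.differentiableOn.inv fun z hz => (hU z hz).1 n).smul_const (c n)
  exact (huniform.tendstoLocallyUniformlyOn.differentiableOn (.of_forall hpartial)
    hUopen).analyticAt (hUopen.mem_nhds hz₀U)

theorem analyticAt_jumpSeries_subtype_notMem (ha : Tendsto (fun n => ‖a n‖) cofinite atTop)
    (hc : Summable fun n => ‖c n‖ / ‖a n‖ ^ 2) {s : Finset ι} {z₀ : ℂ}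
    (hz₀ : ∀ n ∉ s, jumpDenom w (a n) z₀ ≠ 0) :
    AnalyticAt ℂ (jumpSeries w (fun n : {n // n ∉ s} => a n) fun n => c n) z₀ :=
  analyticAt_jumpSeries (ha.comp Subtype.val_injective.tendsto_cofinite)
    (hc.comp_injective Subtype.val_injective) fun n => hz₀ n n.2

theorem meromorphicAt_jumpSeries (ha : Tendsto (fun n => ‖a n‖) cofinite atTop)
    (hc : Summable fun n => ‖c n‖ / ‖a n‖ ^ 2) (w z₀ : ℂ) :
    MeromorphicAt (jumpSeries w a c) z₀ := by
  have hfinite : {n | jumpDenom w (a n) z₀ = 0}.Finite := by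
    refine (eventually_cofinite.1 (eventually_cofinite_jumpDenom_ne_zero ha w (‖z₀‖ + 1))).subset
      fun n hn h => h z₀ (by simp) hn
  rw [funext (jumpSeries_eq_sum_add ha hc w hfinite.toFinset)]
  have hterm (n : ι) : MeromorphicAt (fun z => (jumpDenom w (a n) z)⁻¹ • c n) z₀ :=
    (differentiable_jumpDenom.analyticAt z₀).meromorphicAt.inv.smul (.const (c n) z₀)
  exact (MeromorphicAt.fun_sum fun n _ => hterm n).add
    (analyticAt_jumpSeries_subtype_notMem ha hc fun n hn => by simpa using hn).meromorphicAt

theorem tendsto_jumpDenom_smul_jumpSeries (ha : Tendsto (fun n => ‖a n‖) cofinite atTop)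
    (hc : Summable fun n => ‖c n‖ / ‖a n‖ ^ 2) (hw : w ≠ 0) {k : ι}
    (hk : ∀ n ≠ k, jumpDenom w (a n) (-a k) ≠ 0) :
    Tendsto (fun z => jumpDenom w (a k) z • jumpSeries w a c z) (𝓝[≠] (-a k)) (𝓝 (c k)) := by
  let rest : ℂ → X := jumpSeries w (fun n : {n // n ∉ ({k} : Finset ι)} => a n) fun n => c n
  have hrest : ContinuousAt rest (-a k) :=
    (analyticAt_jumpSeries_subtype_notMem ha hc fun n hn => hk n (by simpa using hn)).continuousAt
  have hlim : Tendsto (fun z => c k + jumpDenom w (a k) z • rest z) (𝓝[≠] (-a k)) (𝓝 (c k)) := by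
    have hcont : ContinuousAt (fun z => c k + jumpDenom w (a k) z • rest z) (-a k) :=
      continuousAt_const.add (differentiable_jumpDenom.continuous.continuousAt.smul hrest)
    simpa only [jumpDenom_neg_self, zero_smul, add_zero] using
      hcont.tendsto.mono_left nhdsWithin_le_nhds
  refine hlim.congr' ?_
  filter_upwards [eventually_nhdsNE_jumpDenom_ne_zero hw] with z hz
  rw [jumpSeries_eq_sum_add ha hc w {k}, Finset.sum_singleton, smul_add, smul_inv_smul₀ hz]

theorem jump_series_vanishing_on_interval_implies_coeff_zero_general
    (ha : Tendsto (fun n => ‖a n‖) cofinite atTop)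
    (hc : Summable fun n => ‖c n‖ / ‖a n‖ ^ 2) (hw : w ≠ 0) {z₀ : ℂ}
    (hz₀ : ∃ᶠ z in 𝓝[≠] z₀, jumpSeries w a c z = 0) {k : ι}
    (hk : ∀ n ≠ k, jumpDenom w (a n) (-a k) ≠ 0) : c k = 0 := by
  have hzero : jumpSeries w a c =ᶠ[𝓝[≠] (-a k)] 0 :=
    eventuallyEq_zero_nhdsNE_of_frequently_eq_zero
      (fun z _ => meromorphicAt_jumpSeries ha hc w z) isPreconnected_univ
      (mem_univ z₀) (mem_univ (-a k)) hz₀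
  refine tendsto_nhds_unique (tendsto_jumpDenom_smul_jumpSeries ha hc hw hk)
    (tendsto_const_nhds.congr' ?_)
  filter_upwards [hzero] with z hz
  rw [hz, Pi.zero_apply, smul_zero]

end Series

/-- If the series `∑ₙ cₙ/((λₙ + z)(λₙ + e^{-2iαπ} z))` vanishes on a real
interval `(r₁,r₂)` contained in `𝒪 = ℂ ∖ ({-λₙ} ∪ {-e^{2iαπ}λₙ})`, then all
coefficients `cₙ` vanish. -/
theorem jump_series_vanishing_on_interval_implies_coeff_zero
    {X : Type*} [NormedAddCommGroup X] [NormedSpace ℂ X] [CompleteSpace X]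
    (α : ℝ) (hα : α ∈ Ioo (0:ℝ) 1)
    (l : ℕ → ℝ) (hl : StrictMono l) (hlpos : ∀ n, 0 < l n)
    (hltop : Tendsto l atTop atTop)
    (c : ℕ → X) (hc : Summable (fun n => ‖c n‖ / (l n) ^ 2))
    (O : Set ℂ)
    (hO : O = univ \ ((fun n => -(l n : ℂ)) '' univ ∪
      (fun n => -Complex.exp (2 * Complex.I * (α : ℂ) * (Real.pi : ℂ)) * (l n : ℂ)) '' univ))
    (r₁ r₂ : ℝ) (hr₁ : 0 < r₁) (hr₁₂ : r₁ < r₂)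
    (hsub : ∀ x ∈ Ioo r₁ r₂, (x : ℂ) ∈ O)
    (hvanish : ∀ x ∈ Ioo r₁ r₂,
      (∑' n, (((l n : ℂ) + (x : ℂ)) *
        ((l n : ℂ) + Complex.exp (-(2 * Complex.I * (α : ℂ) * (Real.pi : ℂ))) * (x : ℂ)))⁻¹ • c n)
        = 0) :
    ∀ n, c n = 0 := by
  have hnorm (n : ℕ) : ‖(l n : ℂ)‖ = l n := Complex.norm_of_nonneg (hlpos n).le
  have hw : ‖Complex.exp (-(2 * Complex.I * (α : ℂ) * (Real.pi : ℂ)))‖ = 1 := by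
    simp [Complex.norm_exp]
  have hmid : (r₁ + r₂) / 2 ∈ Ioo r₁ r₂ := ⟨left_lt_add_div_two.2 hr₁₂, add_div_two_lt_right.2 hr₁₂⟩
  exact fun k => jump_series_vanishing_on_interval_implies_coeff_zero_general
    (by simpa only [hnorm, Nat.cofinite_eq_atTop] using hltop) (by simpa only [hnorm] using hc)
    (Complex.exp_ne_zero _) (frequently_nhdsNE_ofReal_of_forall_mem_Ioo hmid hvanish) fun n hn =>
      jumpDenom_neg_ne_zero_of_norm_ne hw (by simpa only [hnorm] using hl.injective.ne hn)
end

section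
/- Let α ∈ (0,1), let X be a complex Banach space, let (λₙ)_{n≥1} be a strictly increasing sequence of positive real numbers with λₙ → +∞, and let (cₙ)_{n≥1} be a sequence in X with ∑ₙ ‖cₙ‖/λₙ < ∞. Let S : ℂ → ℂ and G : ℂ → X be entire functions such that G(p) = S(p)·∑ₙ cₙ/(λₙ + p^α) for every p ∈ ℂ∖(−∞,0]. Then for every R > 0 one has S(−R)·∑ₙ cₙ/((λₙ + R^α e^{iαπ})(λₙ + R^α e^{−iαπ})) = 0. -/
open Complex Set Filter

open scoped Topology

/-!
Write `F w = ∑ₙ cₙ / (λₙ + w)`. As `∑ₙ ‖cₙ‖ / λₙ < ∞`, dominated convergence makes `F` continuous on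
the whole slit plane, and `|α| < 1` keeps both boundary values `w± = R ^ α * exp (± iαπ)` of `p ^ α`
at `-R` inside it. Letting `p → -R` from either side of the cut gives
`S (-R) • F w₊ = G (-R) = S (-R) • F w₋`. By the resolvent identity `F w₊ - F w₋` is `w₋ - w₊` times
the series in the conclusion, and `w₊ ≠ w₋` because `α ≠ 0`.
-/

section SlitPlane

theorem add_mul_cos_half_le_norm_add_mul_exp (x r φ : ℝ) :
    (x + r) * Real.cos (φ / 2) ≤ ‖(x : ℂ) + r * exp (φ * I)‖ := by
  -- Rotating by `-φ / 2` makes the two phases opposite, so that both have real part `cos (φ / 2)`.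
  have h_factor : (x : ℂ) + r * exp (φ * I) =
      exp ((φ / 2 : ℝ) * I) * (x * exp ((-(φ / 2) : ℝ) * I) + r * exp ((φ / 2 : ℝ) * I)) := by
    have h_cancel : exp ((φ / 2 : ℝ) * I) * exp ((-(φ / 2) : ℝ) * I) = 1 := by
      rw [← exp_add, ← add_mul, ← ofReal_add, add_neg_cancel, ofReal_zero, zero_mul, exp_zero]
    have h_double : exp ((φ / 2 : ℝ) * I) * exp ((φ / 2 : ℝ) * I) = exp (φ * I) := by
      rw [← exp_add, ← add_mul, ← ofReal_add, add_halves]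
    linear_combination -x * h_cancel - r * h_double
  calc (x + r) * Real.cos (φ / 2)
      = (x * exp ((-(φ / 2) : ℝ) * I) + r * exp ((φ / 2 : ℝ) * I)).re := by
        rw [add_re, re_ofReal_mul, re_ofReal_mul, exp_ofReal_mul_I_re, exp_ofReal_mul_I_re,
          Real.cos_neg, add_mul]
    _ ≤ ‖(x : ℂ) + r * exp (φ * I)‖ := by
        rw [h_factor, norm_mul, norm_exp_ofReal_mul_I, one_mul]
        exact re_le_norm _

theorem add_norm_mul_cos_half_arg_le_norm_add (x : ℝ) (w : ℂ) :
    (x + ‖w‖) * Real.cos (arg w / 2) ≤ ‖(x : ℂ) + w‖ := by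
  simpa only [norm_mul_exp_arg_mul_I] using
    add_mul_cos_half_le_norm_add_mul_exp x ‖w‖ (arg w)

theorem cos_half_arg_pos {w : ℂ} (hw : w ∈ slitPlane) : 0 < Real.cos (arg w / 2) := by
  have h_lower := neg_pi_lt_arg w
  have h_upper := (arg_le_pi w).lt_of_ne (slitPlane_arg_ne_pi hw)
  exact Real.cos_pos_of_mem_Ioo ⟨by linarith, by linarith⟩

theorem exists_pos_eventually_mul_le_norm_ofReal_add {w : ℂ} (hw : w ∈ slitPlane) :
    ∃ δ > 0, ∀ᶠ z in 𝓝 w, ∀ x : ℝ, 0 ≤ x → δ * x ≤ ‖(x : ℂ) + z‖ := by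
  obtain ⟨δ, hδ, hδw⟩ := exists_between (cos_half_arg_pos hw)
  have h_cont : ContinuousAt (fun z ↦ Real.cos (arg z / 2)) w :=
    Real.continuous_cos.continuousAt.comp ((continuousAt_arg hw).div_const 2)
  refine ⟨δ, hδ, (h_cont.eventually_const_lt hδw).mono fun z hz x hx ↦ ?_⟩
  calc δ * x ≤ Real.cos (arg z / 2) * (x + ‖z‖) :=
        mul_le_mul hz.le (le_add_of_nonneg_right (norm_nonneg z)) hx (hδ.trans hz).le
    _ ≤ ‖(x : ℂ) + z‖ := by
        rw [mul_comm]
        exact add_norm_mul_cos_half_arg_le_norm_add x z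

theorem ofReal_add_ne_zero_of_mem_slitPlane {x : ℝ} (hx : 0 ≤ x) {w : ℂ} (hw : w ∈ slitPlane) :
    (x : ℂ) + w ≠ 0 := by
  refine fun h ↦ mem_slitPlane_iff_not_le_zero.mp hw ?_
  rw [eq_neg_of_add_eq_zero_right h, ← ofReal_neg]
  exact mod_cast neg_nonpos.mpr hx

end SlitPlane

section StieltjesSeries

variable {ι X : Type*} [NormedAddCommGroup X] [NormedSpace ℂ X]

/-- The Stieltjes transform `w ↦ ∑ₙ cₙ / (λₙ + w)` of the discrete `X`-valued measure with mass `cₙ`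
at `λₙ`, with the sign convention under which positive `λₙ` put the poles on the negative axis. -/
noncomputable def stieltjesSeries (l : ι → ℝ) (c : ι → X) (w : ℂ) : X :=
  ∑' n, ((l n : ℂ) + w)⁻¹ • c n

variable {l : ι → ℝ} {c : ι → X} {w z : ℂ}

theorem exists_summable_bound_stieltjesSeries (hl : ∀ n, 0 < l n)
    (hc : Summable fun n ↦ ‖c n‖ / l n) (hw : w ∈ slitPlane) :
    ∃ b : ι → ℝ, Summable b ∧ ∀ᶠ z in 𝓝 w, ∀ n, ‖((l n : ℂ) + z)⁻¹ • c n‖ ≤ b n := by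
  obtain ⟨δ, hδ, h_lower⟩ := exists_pos_eventually_mul_le_norm_ofReal_add hw
  refine ⟨fun n ↦ δ⁻¹ * (‖c n‖ / l n), hc.mul_left δ⁻¹, h_lower.mono fun z hz n ↦ ?_⟩
  have h_pos : 0 < δ * l n := mul_pos hδ (hl n)
  calc ‖((l n : ℂ) + z)⁻¹ • c n‖ = ‖(l n : ℂ) + z‖⁻¹ * ‖c n‖ := by rw [norm_smul, norm_inv]
    _ ≤ (δ * l n)⁻¹ * ‖c n‖ := by
        gcongr
        exact hz (l n) (hl n).le
    _ = δ⁻¹ * (‖c n‖ / l n) := by rw [mul_inv, mul_assoc, inv_mul_eq_div (l n)]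

variable [CompleteSpace X]

theorem summable_stieltjesSeries (hl : ∀ n, 0 < l n) (hc : Summable fun n ↦ ‖c n‖ / l n)
    (hw : w ∈ slitPlane) : Summable fun n ↦ ((l n : ℂ) + w)⁻¹ • c n := by
  obtain ⟨b, hb, h_bound⟩ := exists_summable_bound_stieltjesSeries hl hc hw
  exact hb.of_norm_bounded h_bound.self_of_nhds

theorem continuousAt_stieltjesSeries (hl : ∀ n, 0 < l n) (hc : Summable fun n ↦ ‖c n‖ / l n)
    (hw : w ∈ slitPlane) : ContinuousAt (stieltjesSeries l c) w := by
  obtain ⟨b, hb, h_bound⟩ := exists_summable_bound_stieltjesSeries hl hc hw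
  refine tendsto_tsum_of_dominated_convergence hb (fun n ↦ ?_) h_bound
  exact ((continuousAt_const.add continuousAt_id).inv₀
    (ofReal_add_ne_zero_of_mem_slitPlane (hl n).le hw)).smul continuousAt_const

theorem stieltjesSeries_sub_stieltjesSeries (hl : ∀ n, 0 < l n)
    (hc : Summable fun n ↦ ‖c n‖ / l n) (hw : w ∈ slitPlane) (hz : z ∈ slitPlane) :
    stieltjesSeries l c w - stieltjesSeries l c z =
      (z - w) • ∑' n, (((l n : ℂ) + w) * ((l n : ℂ) + z))⁻¹ • c n := by
  rw [stieltjesSeries, stieltjesSeries, ← (summable_stieltjesSeries hl hc hw).tsum_sub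
    (summable_stieltjesSeries hl hc hz), ← tsum_const_smul'']
  refine tsum_congr fun n ↦ ?_
  rw [← sub_smul, inv_sub_inv (ofReal_add_ne_zero_of_mem_slitPlane (hl n).le hw)
    (ofReal_add_ne_zero_of_mem_slitPlane (hl n).le hz), add_sub_add_left_eq_sub, smul_smul,
    div_eq_mul_inv]

theorem eq_smul_stieltjesSeries_of_tendsto (hl : ∀ n, 0 < l n) (hc : Summable fun n ↦ ‖c n‖ / l n)
    {S : ℂ → ℂ} {G : ℂ → X} (hS : ContinuousAt S z) (hG : ContinuousAt G z) {f : Filter ℂ} [f.NeBot]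
    (hf : f ≤ 𝓝 z) {g : ℂ → ℂ} (hw : w ∈ slitPlane) (hg : Tendsto g f (𝓝 w))
    (hGS : ∀ᶠ p in f, G p = S p • stieltjesSeries l c (g p)) :
    G z = S z • stieltjesSeries l c w :=
  tendsto_nhds_unique_of_eventuallyEq (hG.mono_left hf)
    ((hS.mono_left hf).smul ((continuousAt_stieltjesSeries hl hc hw).tendsto.comp hg)) hGS

end StieltjesSeries

section BoundaryValues

theorem ofReal_mul_exp_mem_slitPlane {r : ℝ} (hr : 0 < r) {z : ℂ} (hz : |z.im| < Real.pi) :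
    (r : ℂ) * exp z ∈ slitPlane := by
  obtain ⟨h_lower, h_upper⟩ := abs_lt.mp hz
  have h_arg : arg (r * exp z) = z.im := by
    rw [arg_real_mul _ hr, arg_exp, (toIocMod_eq_self _).mpr ⟨h_lower, by linarith⟩]
  rw [mem_slitPlane_iff_arg, h_arg]
  exact ⟨h_upper.ne, mul_ne_zero (ofReal_ne_zero.mpr hr.ne') (exp_ne_zero _)⟩

theorem exp_ne_exp_neg {z : ℂ} (hz : |z.im| < Real.pi) (hz0 : z ≠ 0) : exp z ≠ exp (-z) := by
  obtain ⟨h_lower, h_upper⟩ := abs_lt.mp hz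
  exact fun h ↦ hz0 (self_eq_neg.mp (exp_inj_of_neg_pi_lt_of_le_pi h_lower h_upper.le
    (by rw [neg_im]; linarith) (by rw [neg_im]; linarith) h))

theorem im_pos_subset_slitPlane : {p : ℂ | 0 < p.im} ⊆ slitPlane :=
  fun _ hp ↦ .inr (ne_of_gt hp)

theorem im_neg_subset_slitPlane : {p : ℂ | p.im < 0} ⊆ slitPlane :=
  fun _ hp ↦ .inr (ne_of_lt hp)

theorem neBot_nhdsWithin_im_pos {z : ℂ} (hz : 0 ≤ z.im) : (𝓝[{p : ℂ | 0 < p.im}] z).NeBot := by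
  rwa [← mem_closure_iff_nhdsWithin_neBot, closure_setOfPred_lt_im]

theorem neBot_nhdsWithin_im_neg {z : ℂ} (hz : z.im ≤ 0) : (𝓝[{p : ℂ | p.im < 0}] z).NeBot := by
  rwa [← mem_closure_iff_nhdsWithin_neBot, closure_setOfPred_im_lt]

theorem tendsto_cpow_of_tendsto_log {f : Filter ℂ} {z v : ℂ} (hz : z ≠ 0) (hf : f ≤ 𝓝 z)
    (hv : Tendsto log f (𝓝 v)) (a : ℂ) : Tendsto (· ^ a) f (𝓝 (exp (v * a))) := by
  refine ((continuous_exp.tendsto _).comp (hv.mul_const a)).congr' ?_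
  filter_upwards [hf (isOpen_ne.mem_nhds hz)] with p hp
  exact (cpow_def_of_ne_zero hp a).symm

variable {R : ℝ}

theorem tendsto_cpow_nhdsWithin_im_pos_neg_ofReal (hR : 0 < R) (a : ℂ) :
    Tendsto (· ^ a) (𝓝[{p : ℂ | 0 < p.im}] (-R : ℂ)) (𝓝 ((R : ℂ) ^ a * exp (I * a * Real.pi))) := by
  have hR0 : (R : ℂ) ≠ 0 := ofReal_ne_zero.mpr hR.ne'
  have h_log : Tendsto log (𝓝[{p : ℂ | 0 < p.im}] (-R : ℂ)) (𝓝 (log R + Real.pi * I)) := by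
    refine Tendsto.mono_left (x := 𝓝[{p : ℂ | 0 ≤ p.im}] (-R : ℂ)) ?_
      (nhdsWithin_mono _ fun p (hp : 0 < p.im) ↦ hp.le)
    simpa [hR.le, abs_of_pos hR, ofReal_log] using
      tendsto_log_nhdsWithin_im_nonneg_of_re_neg_of_im_zero (z := -R) (by simpa) (by simp)
  convert tendsto_cpow_of_tendsto_log (neg_ne_zero.mpr hR0) nhdsWithin_le_nhds h_log a using 2
  rw [cpow_def_of_ne_zero hR0, ← exp_add]
  ring_nf

theorem tendsto_cpow_nhdsWithin_im_neg_neg_ofReal (hR : 0 < R) (a : ℂ) :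
    Tendsto (· ^ a) (𝓝[{p : ℂ | p.im < 0}] (-R : ℂ))
      (𝓝 ((R : ℂ) ^ a * exp (-(I * a * Real.pi)))) := by
  have hR0 : (R : ℂ) ≠ 0 := ofReal_ne_zero.mpr hR.ne'
  have h_log : Tendsto log (𝓝[{p : ℂ | p.im < 0}] (-R : ℂ)) (𝓝 (log R - Real.pi * I)) := by
    simpa [hR.le, abs_of_pos hR, ofReal_log] using
      tendsto_log_nhdsWithin_im_neg_of_re_neg_of_im_zero (z := -R) (by simpa) (by simp)
  convert tendsto_cpow_of_tendsto_log (neg_ne_zero.mpr hR0) nhdsWithin_le_nhds h_log a using 2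
  rw [cpow_def_of_ne_zero hR0, ← exp_add]
  ring_nf

end BoundaryValues

theorem branch_cut_jump_vanishes_general
    {ι X : Type*} [NormedAddCommGroup X] [NormedSpace ℂ X] [CompleteSpace X]
    {α : ℝ} (hα : |α| < 1) (hα0 : α ≠ 0) {l : ι → ℝ} (hl : ∀ n, 0 < l n)
    {c : ι → X} (hc : Summable fun n ↦ ‖c n‖ / l n) {S : ℂ → ℂ} {G : ℂ → X} {R : ℝ} (hR : 0 < R)
    (hS : ContinuousAt S (-R)) (hG : ContinuousAt G (-R))
    (hGS : ∀ᶠ p in 𝓝[slitPlane] (-R : ℂ), G p = S p • ∑' n, ((l n : ℂ) + p ^ (α : ℂ))⁻¹ • c n) :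
    S (-(R : ℂ)) •
      (∑' n, (((l n : ℂ) + (R ^ α : ℝ) * exp (I * (α : ℂ) * (Real.pi : ℂ))) *
        ((l n : ℂ) + (R ^ α : ℝ) * exp (-(I * (α : ℂ) * (Real.pi : ℂ)))))⁻¹ • c n) = 0 := by
  have h_rpow : 0 < R ^ α := Real.rpow_pos_of_pos hR α
  have h_cpow : (R : ℂ) ^ (α : ℂ) = (R ^ α : ℝ) := (ofReal_cpow hR.le α).symm
  have h_lim₁ := tendsto_cpow_nhdsWithin_im_pos_neg_ofReal hR α
  have h_lim₂ := tendsto_cpow_nhdsWithin_im_neg_neg_ofReal hR α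
  rw [h_cpow] at h_lim₁ h_lim₂
  have h_phase : |(I * α * Real.pi).im| < Real.pi := by
    simpa [abs_mul, abs_of_pos Real.pi_pos] using mul_lt_of_lt_one_left Real.pi_pos hα
  have h_phase0 : I * α * Real.pi ≠ 0 := by simp [hα0, Real.pi_ne_zero]
  have h_mem₁ := ofReal_mul_exp_mem_slitPlane h_rpow h_phase
  have h_mem₂ := ofReal_mul_exp_mem_slitPlane h_rpow (z := -(I * α * Real.pi))
    (by rwa [neg_im, abs_neg])
  have := neBot_nhdsWithin_im_pos (z := -R) (by simp)
  have := neBot_nhdsWithin_im_neg (z := -R) (by simp)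
  have h_above := eq_smul_stieltjesSeries_of_tendsto hl hc hS hG nhdsWithin_le_nhds h_mem₁ h_lim₁
    (hGS.filter_mono (nhdsWithin_mono _ im_pos_subset_slitPlane))
  have h_below := eq_smul_stieltjesSeries_of_tendsto hl hc hS hG nhdsWithin_le_nhds h_mem₂ h_lim₂
    (hGS.filter_mono (nhdsWithin_mono _ im_neg_subset_slitPlane))
  have h_jump :
      (R ^ α : ℝ) * exp (-(I * α * Real.pi)) - (R ^ α : ℝ) * exp (I * α * Real.pi) ≠ 0 := by
    rw [← mul_sub]
    exact mul_ne_zero (ofReal_ne_zero.mpr h_rpow.ne')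
      (sub_ne_zero.mpr (exp_ne_exp_neg h_phase h_phase0).symm)
  refine (smul_eq_zero_iff_right h_jump).mp ?_
  rw [smul_comm, ← stieltjesSeries_sub_stieltjesSeries hl hc h_mem₁ h_mem₂, smul_sub, ← h_above,
    ← h_below, sub_self]

/-- If `S` and `G` are entire and `G(p) = S(p) ∑ₙ cₙ/(λₙ + p^α)` on the cut
plane, then the jump across the branch cut vanishes:
`S(-R) ∑ₙ cₙ/((λₙ + R^α e^{iαπ})(λₙ + R^α e^{-iαπ})) = 0` for all `R > 0`. -/
theorem branch_cut_jump_vanishes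
    {X : Type*} [NormedAddCommGroup X] [NormedSpace ℂ X] [CompleteSpace X]
    (α : ℝ) (hα : α ∈ Ioo (0:ℝ) 1)
    (l : ℕ → ℝ) (hl : StrictMono l) (hlpos : ∀ n, 0 < l n)
    (hltop : Tendsto l atTop atTop)
    (c : ℕ → X) (hc : Summable (fun n => ‖c n‖ / l n))
    (S : ℂ → ℂ) (hS : Differentiable ℂ S)
    (G : ℂ → X) (hG : Differentiable ℂ G)
    (hGS : ∀ p ∈ Complex.slitPlane,
      G p = S p • ∑' n, ((l n : ℂ) + p ^ (α : ℂ))⁻¹ • c n) :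
    ∀ R : ℝ, 0 < R →
      S (-(R : ℂ)) •
        (∑' n, (((l n : ℂ) + (R ^ α : ℝ) * Complex.exp (Complex.I * (α : ℂ) * (Real.pi : ℂ))) *
          ((l n : ℂ) + (R ^ α : ℝ) * Complex.exp (-(Complex.I * (α : ℂ) * (Real.pi : ℂ)))))⁻¹ • c n)
        = 0 := fun R hR ↦
  branch_cut_jump_vanishes_general (abs_lt.mpr ⟨by linarith [hα.1], hα.2⟩) hα.1.ne' hlpos hc hR
    hS.continuous.continuousAt hG.continuous.continuousAt (eventually_mem_nhdsWithin.mono hGS)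
end

section
/- Let α ∈ (0,1), let X be a complex Banach space, let (λₙ)_{n≥1} be a strictly increasing sequence of positive real numbers with λₙ → +∞, and let (cₙ)_{n≥1} be a sequence in X with ∑ₙ ‖cₙ‖/λₙ < ∞. Let S : ℂ → ℂ be entire with S not identically zero, and let G : ℂ → X be entire, such that G(p) = S(p)·∑ₙ cₙ/(λₙ + p^α) for every p ∈ ℂ∖(−∞,0]. Then cₙ = 0 for every n ≥ 1, and consequently G vanishes identically. -/
open Complex Set Filter

/-!
Put `F(z) = ∑ₙ cₙ / (λₙ + z)`, so that `G(p) = S(p) • F(p ^ α)` off the cut. Continuity of `G` and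
`S` across the cut forces `F` to take the same value at the two boundary values `exp (α (s ± iπ))`
of `p ^ α` at `-exp s`, wherever `S` does not vanish. As these differ by the constant factor
`ω = exp (-2πiα)`, the identity theorem gives `F(z) = F(ω z)` off the poles. At `-λₘ` the right-hand
side is regular, because `ω` is not a positive real number, so the residue `cₘ` of the left-hand
side vanishes.
-/

open scoped Topology Real

section PoleSet

variable {ι X : Type*} [Zero X] {a : ι → ℂ} {c : ι → X}

/-- The set of poles of the series `∑ₙ cₙ / (aₙ + z)`: the points `-aₙ` whose coefficient `cₙ` is
not zero. -/
def poleSet (a : ι → ℂ) (c : ι → X) : Set ℂ :=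
  (fun n => -a n) '' Function.support c

lemma notMem_poleSet_iff {z : ℂ} : z ∉ poleSet a c ↔ ∀ n, c n ≠ 0 → a n + z ≠ 0 := by
  simp only [poleSet, mem_image, Function.mem_support, not_exists, not_and, ne_eq,
    neg_eq_iff_add_eq_zero]

lemma isClosed_poleSet (ha : Tendsto a cofinite (cocompact ℂ)) : IsClosed (poleSet a c) := by
  let : TopologicalSpace ι := ⊥
  have : DiscreteTopology ι := ⟨rfl⟩
  have hproper : IsProperMap a :=
    isProperMap_iff_tendsto_cocompact.2 ⟨continuous_of_discreteTopology, by
      rwa [cocompact_eq_cofinite]⟩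
  exact ((Homeomorph.neg ℂ).isProperMap.comp hproper).isClosedMap _ (isClosed_discrete _)

lemma neg_notMem_poleSet_update [DecidableEq ι] (hinj : Function.Injective a) (m : ι) :
    -a m ∉ poleSet a (Function.update c m 0) := by
  rintro ⟨n, hn, hnm⟩
  simp [hinj (neg_injective hnm)] at hn

lemma eventually_nhdsNE_notMem_poleSet (ha : Tendsto a cofinite (cocompact ℂ))
    (hinj : Function.Injective a) (m : ι) : ∀ᶠ z in 𝓝[≠] (-a m), z ∉ poleSet a c := by
  classical
  have hnear := (isClosed_poleSet (c := Function.update c m 0) ha).isOpen_compl.mem_nhds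
    (neg_notMem_poleSet_update hinj m)
  filter_upwards [nhdsWithin_le_nhds hnear, self_mem_nhdsWithin] with z hz hzm
  rintro ⟨n, hn, rfl⟩
  have hnm : n ≠ m := fun h => hzm (by rw [h, mem_singleton_iff])
  exact hz ⟨n, by simpa [hnm] using hn, rfl⟩

end PoleSet

section PartialFractions

variable {ι X : Type*} [NormedAddCommGroup X] {a : ι → ℂ} {c : ι → X}

lemma countable_poleSet (ha0 : ∀ n, a n ≠ 0) (hc : Summable fun n => ‖c n‖ / ‖a n‖) :
    (poleSet a c).Countable := by
  refine (hc.countable_support.mono fun n hn => ?_).image _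
  exact div_ne_zero (norm_ne_zero_iff.2 hn) (norm_ne_zero_iff.2 (ha0 n))

variable [NormedSpace ℂ X]

/-- The series of simple fractions `∑ₙ cₙ / (aₙ + z)` with vector coefficients. At `z = -aₙ` the
`n`-th term is `0`, by the convention `0⁻¹ = 0`. -/
noncomputable def partialFractionSeries (a : ι → ℂ) (c : ι → X) (z : ℂ) : X :=
  ∑' n, (a n + z)⁻¹ • c n

lemma norm_inv_add_smul_le {a z : ℂ} (ha : a ≠ 0) {ε R : ℝ} (hε : 0 < ε) (hz : ‖z‖ ≤ R)
    (haz : ε ≤ ‖a + z‖) (x : X) : ‖(a + z)⁻¹ • x‖ ≤ (1 + R / ε) * (‖x‖ / ‖a‖) := by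
  have hR : 0 ≤ R := (norm_nonneg z).trans hz
  have hle : ‖a‖ ≤ (1 + R / ε) * ‖a + z‖ := calc
    ‖a‖ ≤ ‖a + z‖ + ‖z‖ := by simpa using norm_sub_le (a + z) z
    _ ≤ ‖a + z‖ + R / ε * ε := by rw [div_mul_cancel₀ _ hε.ne']; gcongr
    _ ≤ ‖a + z‖ + R / ε * ‖a + z‖ := by gcongr
    _ = (1 + R / ε) * ‖a + z‖ := by ring
  have hinv : ‖a + z‖⁻¹ ≤ (1 + R / ε) / ‖a‖ := by
    rwa [inv_le_iff_one_le_mul₀ (hε.trans_le haz), div_mul_eq_mul_div,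
      one_le_div (norm_pos_iff.2 ha)]
  calc ‖(a + z)⁻¹ • x‖ = ‖a + z‖⁻¹ * ‖x‖ := by rw [norm_smul, norm_inv]
    _ ≤ (1 + R / ε) / ‖a‖ * ‖x‖ := by gcongr
    _ = (1 + R / ε) * (‖x‖ / ‖a‖) := by ring

lemma exists_ball_norm_partialFraction_le (ha : Tendsto a cofinite (cocompact ℂ))
    (ha0 : ∀ n, a n ≠ 0) {z₀ : ℂ} (hz₀ : z₀ ∉ poleSet a c) :
    ∃ ε > 0, Metric.ball z₀ ε ⊆ (poleSet a c)ᶜ ∧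
      ∃ C : ℝ, ∀ n, ∀ z ∈ Metric.ball z₀ ε, ‖(a n + z)⁻¹ • c n‖ ≤ C * (‖c n‖ / ‖a n‖) := by
  obtain ⟨r, hr, hball⟩ := Metric.isOpen_iff.1 (isClosed_poleSet (c := c) ha).isOpen_compl z₀ hz₀
  refine ⟨r / 2, half_pos hr, (Metric.ball_subset_ball (half_le_self hr.le)).trans hball,
    1 + (‖z₀‖ + r / 2) / (r / 2), fun n z hz => ?_⟩
  rw [mem_ball_iff_norm] at hz
  rcases eq_or_ne (c n) 0 with hcn | hcn
  · simp [hcn]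
  have hfar : r ≤ ‖a n + z₀‖ := by
    by_contra! hlt
    have hmem : -a n ∈ Metric.ball z₀ r := by
      rwa [mem_ball_iff_norm', sub_neg_eq_add, add_comm]
    exact hball hmem (mem_image_of_mem _ hcn)
  refine norm_inv_add_smul_le (ha0 n) (half_pos hr) ?_ ?_ (c n)
  · linarith [norm_le_norm_add_norm_sub' z z₀]
  · have := norm_sub_le (a n + z) (z - z₀)
    rw [show a n + z - (z - z₀) = a n + z₀ by ring] at this
    linarith

variable [CompleteSpace X]

lemma summable_partialFraction (ha : Tendsto a cofinite (cocompact ℂ)) (ha0 : ∀ n, a n ≠ 0)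
    (hc : Summable fun n => ‖c n‖ / ‖a n‖) {z : ℂ} (hz : z ∉ poleSet a c) :
    Summable fun n => (a n + z)⁻¹ • c n := by
  obtain ⟨ε, hε, -, C, hbound⟩ := exists_ball_norm_partialFraction_le ha ha0 hz
  exact (hc.mul_left C).of_norm_bounded fun n => hbound n z (Metric.mem_ball_self hε)

lemma differentiableAt_partialFractionSeries (ha : Tendsto a cofinite (cocompact ℂ))
    (ha0 : ∀ n, a n ≠ 0) (hc : Summable fun n => ‖c n‖ / ‖a n‖) {z : ℂ} (hz : z ∉ poleSet a c) :
    DifferentiableAt ℂ (partialFractionSeries a c) z := by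
  obtain ⟨ε, hε, hball, C, hbound⟩ := exists_ball_norm_partialFraction_le ha ha0 hz
  refine (differentiableOn_tsum_of_summable_norm (hc.mul_left C) (fun n y hy => ?_)
    Metric.isOpen_ball hbound).differentiableAt (Metric.ball_mem_nhds z hε)
  rcases eq_or_ne (c n) 0 with hcn | hcn
  · simp only [hcn, smul_zero]
    exact differentiableWithinAt_const _
  · have hne : a n + y ≠ 0 := notMem_poleSet_iff.1 (hball hy) n hcn
    exact (((differentiableAt_id.const_add _).inv hne).smul_const _).differentiableWithinAt

lemma partialFractionSeries_eq_add_update [DecidableEq ι] (ha : Tendsto a cofinite (cocompact ℂ))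
    (ha0 : ∀ n, a n ≠ 0) (hc : Summable fun n => ‖c n‖ / ‖a n‖) (m : ι) {z : ℂ}
    (hz : z ∉ poleSet a c) :
    partialFractionSeries a c z =
      (a m + z)⁻¹ • c m + partialFractionSeries a (Function.update c m 0) z := by
  rw [partialFractionSeries, (summable_partialFraction ha ha0 hc hz).tsum_eq_add_tsum_ite m]
  congr 1
  refine tsum_congr fun n => ?_
  rw [Function.update_apply]
  split_ifs <;> simp

theorem tendsto_smul_partialFractionSeries (ha : Tendsto a cofinite (cocompact ℂ))
    (ha0 : ∀ n, a n ≠ 0) (hinj : Function.Injective a) (hc : Summable fun n => ‖c n‖ / ‖a n‖)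
    (m : ι) :
    Tendsto (fun z => (a m + z) • partialFractionSeries a c z) (𝓝[≠] (-a m)) (𝓝 (c m)) := by
  classical
  set c' := Function.update c m 0 with hc'_def
  have hc' : Summable fun n => ‖c' n‖ / ‖a n‖ := by
    refine hc.of_nonneg_of_le (fun n => by positivity) fun n => ?_
    gcongr
    rw [hc'_def, Function.update_apply]
    split_ifs <;> simp
  have hregular : ContinuousAt
      (fun z => c m + (a m + z) • partialFractionSeries a c' z) (-a m) := by
    have := (differentiableAt_partialFractionSeries ha ha0 hc'
      (neg_notMem_poleSet_update hinj m)).continuousAt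
    fun_prop
  have hlim := hregular.tendsto.mono_left (nhdsWithin_le_nhds (s := {-a m}ᶜ))
  rw [add_neg_cancel, zero_smul, add_zero] at hlim
  refine hlim.congr' ?_
  filter_upwards [eventually_nhdsNE_notMem_poleSet (c := c) ha hinj m, self_mem_nhdsWithin]
    with z hz hzm
  have hne : a m + z ≠ 0 := fun h => hzm (eq_neg_of_add_eq_zero_right h)
  rw [partialFractionSeries_eq_add_update ha ha0 hc m hz, smul_add, smul_inv_smul₀ hne]

theorem coeff_eq_zero_of_eventuallyEq_continuousAt (ha : Tendsto a cofinite (cocompact ℂ))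
    (ha0 : ∀ n, a n ≠ 0) (hinj : Function.Injective a) (hc : Summable fun n => ‖c n‖ / ‖a n‖)
    {m : ι} {H : ℂ → X} (hH : ContinuousAt H (-a m))
    (heq : partialFractionSeries a c =ᶠ[𝓝[≠] (-a m)] H) : c m = 0 := by
  have hzero : Tendsto (fun z => (a m + z) • H z) (𝓝[≠] (-a m)) (𝓝 0) := by
    have hcont : ContinuousAt (fun z => (a m + z) • H z) (-a m) := by fun_prop
    simpa using hcont.tendsto.mono_left nhdsWithin_le_nhds
  refine tendsto_nhds_unique (tendsto_smul_partialFractionSeries ha ha0 hinj hc m)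
    (hzero.congr' ?_)
  filter_upwards [heq] with z hz
  rw [hz]

theorem eqOn_partialFractionSeries_mul (ha : Tendsto a cofinite (cocompact ℂ))
    (ha0 : ∀ n, a n ≠ 0) (hc : Summable fun n => ‖c n‖ / ‖a n‖) {ω w : ℂ} (hω : ω ≠ 0)
    (hw : w ∉ poleSet a c) (hωw : ω * w ∉ poleSet a c)
    (heq : ∃ᶠ z in 𝓝[≠] w, partialFractionSeries a c z = partialFractionSeries a c (ω * z)) :
    EqOn (partialFractionSeries a c) (fun z => partialFractionSeries a c (ω * z))
      (poleSet a c ∪ (ω * ·) ⁻¹' poleSet a c)ᶜ := by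
  have hopen : IsOpen (poleSet a c ∪ (ω * ·) ⁻¹' poleSet a c)ᶜ := by
    have hclosed := isClosed_poleSet (c := c) ha
    exact (hclosed.union (hclosed.preimage (continuous_const_mul ω))).isOpen_compl
  have hconn : IsPreconnected (poleSet a c ∪ (ω * ·) ⁻¹' poleSet a c)ᶜ := by
    have hcount := countable_poleSet ha0 hc
    refine ((hcount.union (hcount.preimage (mul_right_injective₀ hω)))
      |>.isConnected_compl_of_one_lt_rank ?_).isPreconnected
    rw [Complex.rank_real_complex]
    exact Nat.one_lt_ofNat
  refine AnalyticOnNhd.eqOn_of_preconnected_of_frequently_eq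
    (DifferentiableOn.analyticOnNhd (fun z hz => ?_) hopen)
    (DifferentiableOn.analyticOnNhd (fun z hz => ?_) hopen) hconn (not_or.2 ⟨hw, hωw⟩) heq
  · exact (differentiableAt_partialFractionSeries ha ha0 hc
      (not_or.1 hz).1).differentiableWithinAt
  · exact ((differentiableAt_partialFractionSeries ha ha0 hc (not_or.1 hz).2).comp z
      (differentiableAt_id.const_mul ω)).differentiableWithinAt

theorem coeff_eq_zero_of_frequently_eq_mul (ha : Tendsto a cofinite (cocompact ℂ))
    (ha0 : ∀ n, a n ≠ 0) (hinj : Function.Injective a) (hc : Summable fun n => ‖c n‖ / ‖a n‖)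
    {ω w : ℂ} (hω : ω ≠ 0) (hw : w ∉ poleSet a c) (hωw : ω * w ∉ poleSet a c)
    (heq : ∃ᶠ z in 𝓝[≠] w, partialFractionSeries a c z = partialFractionSeries a c (ω * z))
    {m : ι} (hm : ω * -a m ∉ poleSet a c) : c m = 0 := by
  have hmul : ContinuousAt (ω * ·) (-a m) := by fun_prop
  have hregular : ContinuousAt (fun z => partialFractionSeries a c (ω * z)) (-a m) :=
    (differentiableAt_partialFractionSeries ha ha0 hc hm).continuousAt.comp hmul
  refine coeff_eq_zero_of_eventuallyEq_continuousAt ha ha0 hinj hc hregular ?_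
  filter_upwards [eventually_nhdsNE_notMem_poleSet (c := c) ha hinj m,
    nhdsWithin_le_nhds (hmul ((isClosed_poleSet ha).isOpen_compl.mem_nhds hm))] with z hz hωz
  exact eqOn_partialFractionSeries_mul ha ha0 hc hω hw hωw heq (not_or.2 ⟨hz, hωz⟩)

end PartialFractions

section BoundaryValues

variable {X : Type*} [AddCommGroup X] [Module ℂ X] [TopologicalSpace X] [ContinuousSMul ℂ X]
  [T2Space X]

lemma eq_smul_of_tendsto_log {𝓕 : Filter ℂ} [𝓕.NeBot] {x L α : ℂ} (h𝓕 : 𝓕 ≤ 𝓝 x)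
    (hslit : ∀ᶠ p in 𝓕, p ∈ slitPlane) (hlog : Tendsto log 𝓕 (𝓝 L)) {D : Set ℂ}
    (hD : D ∈ 𝓝 (exp (α * L))) {F G : ℂ → X} {S : ℂ → ℂ} (hF : ContinuousAt F (exp (α * L)))
    (hS : ContinuousAt S x) (hG : ContinuousAt G x)
    (hGS : ∀ p ∈ slitPlane, p ^ α ∈ D → G p = S p • F (p ^ α)) :
    G x = S x • F (exp (α * L)) := by
  have hcpow : Tendsto (· ^ α) 𝓕 (𝓝 (exp (α * L))) := by
    refine ((continuous_exp.tendsto _).comp (hlog.const_mul α)).congr' ?_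
    filter_upwards [hslit] with p hp
    simp only [Function.comp_apply, cpow_def_of_ne_zero (slitPlane_ne_zero hp), mul_comm]
  refine tendsto_nhds_unique (hG.tendsto.mono_left h𝓕)
    (((hS.tendsto.mono_left h𝓕).smul (hF.tendsto.comp hcpow)).congr' ?_)
  filter_upwards [hslit, hcpow hD] with p hp hpD
  exact (hGS p hp hpD).symm

theorem eq_on_branches_of_eq_smul_cpow {α : ℂ} {s : ℝ} {D : Set ℂ} (hD : IsOpen D)
    {F G : ℂ → X} {S : ℂ → ℂ} (hF : ∀ z ∈ D, ContinuousAt F z)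
    (hS : ContinuousAt S (-exp s)) (hG : ContinuousAt G (-exp s)) (hS0 : S (-exp s) ≠ 0)
    (hGS : ∀ p ∈ slitPlane, p ^ α ∈ D → G p = S p • F (p ^ α))
    (hpos : exp (α * (s + π * I)) ∈ D) (hneg : exp (α * (s - π * I)) ∈ D) :
    F (exp (α * (s + π * I))) = F (exp (α * (s - π * I))) := by
  have hre : (-exp (s : ℂ)).re < 0 := by simp [exp_ofReal_re, Real.exp_pos]
  have him : (-exp (s : ℂ)).im = 0 := by simp [exp_ofReal_im]
  have hlog : Real.log ‖-exp (s : ℂ)‖ = s := by simp [norm_exp]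
  have hlog_pos := tendsto_log_nhdsWithin_im_nonneg_of_re_neg_of_im_zero hre him
  have hlog_neg := tendsto_log_nhdsWithin_im_neg_of_re_neg_of_im_zero hre him
  rw [hlog] at hlog_pos hlog_neg
  have : (𝓝[{z : ℂ | 0 < z.im}] (-exp (s : ℂ))).NeBot :=
    mem_closure_iff_nhdsWithin_neBot.1 (by rw [closure_setOfPred_lt_im]; exact him.ge)
  have : (𝓝[{z : ℂ | z.im < 0}] (-exp (s : ℂ))).NeBot :=
    mem_closure_iff_nhdsWithin_neBot.1 (by rw [closure_setOfPred_im_lt]; exact him.le)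
  have hG_pos : G (-exp s) = S (-exp s) • F (exp (α * (s + π * I))) :=
    eq_smul_of_tendsto_log (𝓕 := 𝓝[{z : ℂ | 0 < z.im}] (-exp s)) nhdsWithin_le_nhds
      (eventually_mem_nhdsWithin.mono fun p hp => mem_slitPlane_iff.2 (Or.inr (ne_of_gt hp)))
      (hlog_pos.mono_left (nhdsWithin_mono _ fun p (hp : 0 < p.im) => mem_ofPred.2 hp.le))
      (hD.mem_nhds hpos) (hF _ hpos) hS hG hGS
  have hG_neg : G (-exp s) = S (-exp s) • F (exp (α * (s - π * I))) :=
    eq_smul_of_tendsto_log (𝓕 := 𝓝[{z : ℂ | z.im < 0}] (-exp s)) nhdsWithin_le_nhds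
      (eventually_mem_nhdsWithin.mono fun p hp => mem_slitPlane_iff.2 (Or.inr (ne_of_lt hp)))
      hlog_neg (hD.mem_nhds hneg) (hF _ hneg) hS hG hGS
  exact smul_right_injective X hS0 (hG_pos.symm.trans hG_neg)

lemma tendsto_exp_mul_add_nhdsNE {α : ℂ} (hα : α ≠ 0) (b : ℂ) (s₀ : ℝ) :
    Tendsto (fun s : ℝ => exp (α * (s + b))) (𝓝[≠] s₀) (𝓝[≠] (exp (α * (s₀ + b)))) := by
  have hderiv : HasDerivAt (fun s : ℝ => exp (α * (s + b))) _ s₀ :=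
    (((hasDerivAt_id s₀).ofReal_comp.add_const b).const_mul α).cexp
  exact hderiv.tendsto_nhdsNE (by simp [hα, exp_ne_zero])

end BoundaryValues

lemma dense_slitPlane : Dense slitPlane :=
  ((dense_compl_singleton (0 : ℝ)).preimage isOpenMap_im).mono fun _ hz =>
    mem_slitPlane_iff.2 (Or.inr hz)

lemma exists_neg_ne_zero_of_differentiable {X : Type*} [NormedAddCommGroup X]
    [NormedSpace ℂ X] [CompleteSpace X] {f : ℂ → X}
    (hf : Differentiable ℂ f) (hf0 : ∃ p, f p ≠ 0) : ∃ x : ℝ, x < 0 ∧ f x ≠ 0 := by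
  by_contra! hzero
  obtain ⟨p, hp⟩ := hf0
  have hreal : Tendsto (fun x : ℝ => (x : ℂ)) (𝓝[≠] (-1)) (𝓝[≠] ((-1 : ℝ) : ℂ)) :=
    (hasDerivAt_id (-1 : ℝ)).ofReal_comp.tendsto_nhdsNE (by simp)
  have hneg : ∀ᶠ x : ℝ in 𝓝[≠] (-1), x < 0 := nhdsWithin_le_nhds (Iio_mem_nhds neg_one_lt_zero)
  have hfreq : ∃ᶠ z in 𝓝[≠] ((-1 : ℝ) : ℂ), f z = 0 :=
    hreal.frequently (hneg.mono hzero).frequently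
  exact hp (AnalyticOnNhd.eqOn_zero_of_preconnected_of_frequently_eq_zero
    (fun z _ => hf.analyticAt z) isPreconnected_univ (mem_univ _) hfreq (mem_univ p))

section NonIntegerExponent

variable {α : ℝ}

lemma im_exp_mul_add_pi_ne_zero (hα : ∀ k : ℤ, α ≠ k) (s : ℝ) :
    (exp (α * (s + π * I))).im ≠ 0 := by
  have him : (exp (α * (s + π * I))).im = Real.exp (α * s) * Real.sin (α * π) := by
    simp [exp_im]
  rw [him]
  refine mul_ne_zero (Real.exp_ne_zero _) fun hsin => ?_
  obtain ⟨k, hk⟩ := Real.sin_eq_zero_iff.1 hsin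
  exact hα k (mul_right_cancel₀ Real.pi_ne_zero hk).symm

lemma im_exp_mul_sub_pi_ne_zero (hα : ∀ k : ℤ, α ≠ k) (s : ℝ) :
    (exp (α * (s - π * I))).im ≠ 0 := by
  have hreflect : (α * (s - π * I) : ℂ) = (-α : ℝ) * ((-s : ℝ) + π * I) := by
    push_cast
    ring
  rw [hreflect]
  refine im_exp_mul_add_pi_ne_zero (fun k hk => hα (-k) ?_) (-s)
  rw [Int.cast_neg, ← hk, neg_neg]

lemma exp_neg_two_pi_mul_ne_ofReal (hα : ∀ k : ℤ, α ≠ k) {t : ℝ} (ht : 0 < t) :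
    exp (-(2 * π * I) * α) ≠ t := by
  intro h
  have hnorm : ‖exp (-(2 * π * I) * α)‖ = 1 := by simp [norm_exp]
  have ht1 : t = 1 := by rwa [h, norm_real, Real.norm_of_nonneg ht.le] at hnorm
  rw [ht1, ofReal_one, exp_eq_one_iff] at h
  obtain ⟨k, hk⟩ := h
  refine hα (-k) ?_
  have : (α : ℂ) = ((-k : ℤ) : ℂ) :=
    mul_left_cancel₀ two_pi_I_ne_zero (by push_cast; linear_combination -hk)
  exact_mod_cast this

lemma ne_intCast_of_mem_Ioo (hα : α ∈ Ioo (0 : ℝ) 1) (k : ℤ) : α ≠ k := by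
  rintro rfl
  have h0 : 0 < k := by exact_mod_cast hα.1
  have h1 : k < 1 := by exact_mod_cast hα.2
  lia

end NonIntegerExponent

section PositivePoles

variable {ι X : Type*} {l : ι → ℝ} {c : ι → X}

lemma tendsto_ofReal_cofinite_cocompact (hltop : Tendsto l cofinite atTop) :
    Tendsto (fun n => (l n : ℂ)) cofinite (cocompact ℂ) :=
  isometry_ofReal.isClosedEmbedding.tendsto_cocompact.comp (hltop.mono_right atTop_le_cocompact)

lemma notMem_poleSet_ofReal_of_im_ne_zero [Zero X] {z : ℂ} (hz : z.im ≠ 0) :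
    z ∉ poleSet (fun n => (l n : ℂ)) c := by
  rintro ⟨n, -, rfl⟩
  simp at hz

lemma mul_neg_notMem_poleSet_ofReal [Zero X] (hlpos : ∀ n, 0 < l n) {ω : ℂ}
    (hω : ∀ t : ℝ, 0 < t → ω ≠ t) (m : ι) : ω * -(l m : ℂ) ∉ poleSet (fun n => (l n : ℂ)) c := by
  rintro ⟨n, -, hn : -(l n : ℂ) = ω * -(l m : ℂ)⟩
  refine hω (l n / l m) (div_pos (hlpos n) (hlpos m)) ?_
  rw [ofReal_div, eq_div_iff (ofReal_ne_zero.2 (hlpos m).ne')]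
  linear_combination hn

variable [NormedAddCommGroup X] [NormedSpace ℂ X] [CompleteSpace X]

theorem coeff_eq_zero_of_eq_on_branches {α : ℝ} (hα : ∀ k : ℤ, α ≠ k)
    (hl : Function.Injective l) (hlpos : ∀ n, 0 < l n) (hltop : Tendsto l cofinite atTop)
    (hc : Summable fun n => ‖c n‖ / ‖(l n : ℂ)‖) {s₀ : ℝ}
    (heq : ∃ᶠ s : ℝ in 𝓝[≠] s₀,
      partialFractionSeries (fun n => (l n : ℂ)) c (exp (α * (s + π * I))) =
        partialFractionSeries (fun n => (l n : ℂ)) c (exp (α * (s - π * I))))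
    (m : ι) : c m = 0 := by
  have hα0 : (α : ℂ) ≠ 0 := ofReal_ne_zero.2 (by simpa using hα 0)
  set ω : ℂ := exp (-(2 * π * I) * α) with hω
  have hrot (s : ℝ) : ω * exp (α * (s + π * I)) = exp (α * (s - π * I)) := by
    rw [hω, ← exp_add]
    ring_nf
  refine coeff_eq_zero_of_frequently_eq_mul (ω := ω) (w := exp (α * (s₀ + π * I)))
    (tendsto_ofReal_cofinite_cocompact hltop) (fun n => ofReal_ne_zero.2 (hlpos n).ne')
    (ofReal_injective.comp hl) hc (exp_ne_zero _)
    (notMem_poleSet_ofReal_of_im_ne_zero (im_exp_mul_add_pi_ne_zero hα s₀)) ?_ ?_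
    (mul_neg_notMem_poleSet_ofReal hlpos (fun t => exp_neg_two_pi_mul_ne_ofReal hα) m)
  · rw [hrot]
    exact notMem_poleSet_ofReal_of_im_ne_zero (im_exp_mul_sub_pi_ne_zero hα s₀)
  · refine (tendsto_exp_mul_add_nhdsNE hα0 (π * I) s₀).frequently (heq.mono fun s hs => ?_)
    rw [hs, hrot]

end PositivePoles

theorem entire_extension_implies_coeff_zero_general
    {ι X : Type*} [NormedAddCommGroup X] [NormedSpace ℂ X] [CompleteSpace X]
    (α : ℝ) (hα : ∀ k : ℤ, α ≠ k)
    (l : ι → ℝ) (hl : Function.Injective l) (hlpos : ∀ n, 0 < l n)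
    (hltop : Tendsto l cofinite atTop)
    (c : ι → X) (hc : Summable fun n => ‖c n‖ / l n)
    (S : ℂ → ℂ) (hS : Continuous S) (hS0 : ∃ x : ℝ, x < 0 ∧ S x ≠ 0)
    (G : ℂ → X) (hG : Continuous G)
    (hGS : ∀ p ∈ slitPlane, (∀ n, c n ≠ 0 → (l n : ℂ) + p ^ (α : ℂ) ≠ 0) →
      G p = S p • ∑' n, ((l n : ℂ) + p ^ (α : ℂ))⁻¹ • c n) :
    (∀ n, c n = 0) ∧ (∀ p : ℂ, G p = 0) := by
  suffices hcoeff : ∀ n, c n = 0 by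
    refine ⟨hcoeff, congrFun (hG.ext_on dense_slitPlane continuous_const fun p hp => ?_)⟩
    simp [hGS p hp (by simp [hcoeff]), hcoeff]
  have ha := tendsto_ofReal_cofinite_cocompact hltop
  have ha0 (n : ι) : (l n : ℂ) ≠ 0 := ofReal_ne_zero.2 (hlpos n).ne'
  have hc' : Summable fun n => ‖c n‖ / ‖(l n : ℂ)‖ := by
    simpa only [norm_real, Real.norm_of_nonneg (hlpos _).le] using hc
  obtain ⟨x, hx, hSx⟩ := hS0
  have hS_near : ∀ᶠ s : ℝ in 𝓝 (Real.log (-x)), S (-exp s) ≠ 0 := by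
    have hcont : Continuous fun s : ℝ => S (-exp s) := by fun_prop
    refine hcont.continuousAt.eventually_ne ?_
    rwa [← ofReal_exp, Real.exp_log (neg_pos.2 hx), ofReal_neg, neg_neg]
  refine coeff_eq_zero_of_eq_on_branches (s₀ := Real.log (-x)) hα hl hlpos hltop hc'
    (Eventually.frequently ?_)
  filter_upwards [nhdsWithin_le_nhds hS_near] with s hs
  exact eq_on_branches_of_eq_smul_cpow (isClosed_poleSet ha).isOpen_compl
    (fun z hz => (differentiableAt_partialFractionSeries ha ha0 hc' hz).continuousAt)
    hS.continuousAt hG.continuousAt hs (fun p hp hpole => hGS p hp (notMem_poleSet_iff.1 hpole))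
    (notMem_poleSet_ofReal_of_im_ne_zero (im_exp_mul_add_pi_ne_zero hα s))
    (notMem_poleSet_ofReal_of_im_ne_zero (im_exp_mul_sub_pi_ne_zero hα s))

/-- If `S` is entire and not identically zero, `G` is entire, and
`G(p) = S(p) ∑ₙ cₙ/(λₙ + p^α)` on the cut plane, then all coefficients `cₙ`
vanish and `G ≡ 0`. -/
theorem entire_extension_implies_coeff_zero
    {X : Type*} [NormedAddCommGroup X] [NormedSpace ℂ X] [CompleteSpace X]
    (α : ℝ) (hα : α ∈ Ioo (0:ℝ) 1)
    (l : ℕ → ℝ) (hl : StrictMono l) (hlpos : ∀ n, 0 < l n)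
    (hltop : Tendsto l atTop atTop)
    (c : ℕ → X) (hc : Summable (fun n => ‖c n‖ / l n))
    (S : ℂ → ℂ) (hS : Differentiable ℂ S) (hS0 : ¬ (∀ p : ℂ, S p = 0))
    (G : ℂ → X) (hG : Differentiable ℂ G)
    (hGS : ∀ p ∈ Complex.slitPlane,
      G p = S p • ∑' n, ((l n : ℂ) + p ^ (α : ℂ))⁻¹ • c n) :
    (∀ n, c n = 0) ∧ (∀ p : ℂ, G p = 0) :=
  entire_extension_implies_coeff_zero_general α (ne_intCast_of_mem_Ioo hα) l hl.injective hlpos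
    (Nat.cofinite_eq_atTop ▸ hltop) c hc S hS.continuous
    (exists_neg_ne_zero_of_differentiable hS (not_forall.1 hS0)) G hG.continuous
    fun p hp _ => hGS p hp
end

section
/- Let α ∈ (0,1), let X be a complex Banach space, let (λₙ)_{n≥1} be a strictly increasing sequence of positive real numbers with λₙ → +∞, and let (cₙ)_{n≥1} be a sequence in X with ∑ₙ ‖cₙ‖/λₙ² < ∞ and with cₙ₀ ≠ 0 for at least one n₀. Then for every ε > 0 there exists r ∈ (0, ε) such that ∑ₙ cₙ/((λₙ + r e^{iαπ})(λₙ + r e^{−iαπ})) ≠ 0. -/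
open Complex Set Filter

/-!
Let `m` be the index with `l m` smallest among those with `c m ≠ 0`, and let `M = max ‖w‖ ‖v‖`.
Every term of `F z = ∑ₙ cₙ/((lₙ + z w)(lₙ + z v))` is holomorphic on the disc of radius `l m / M`,
and so is `F`. If `F` had zeros accumulating at `0`, it would vanish on that disc. But the `m`-th
denominator has a zero `z₀` on the boundary circle, while the sum of the other terms is holomorphic
on a larger disc because the `lₙ` are distinct and tend to infinity; so multiplying `F` by this
denominator and letting `z → z₀` leaves `c m = 0`, a contradiction.
-/

open scoped Topology

section Bounds

variable {X : Type*} [NormedAddCommGroup X] [NormedSpace ℂ X] {a θ : ℝ} {u u' : ℂ}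

lemma one_sub_mul_le_norm_ofReal_add (hu : ‖u‖ ≤ θ * a) : (1 - θ) * a ≤ ‖(a : ℂ) + u‖ :=
  calc (1 - θ) * a = a - θ * a := by ring
    _ ≤ ‖(a : ℂ)‖ - ‖u‖ := sub_le_sub ((le_abs_self a).trans_eq (norm_real a).symm) hu
    _ ≤ ‖(a : ℂ) + u‖ := norm_sub_le_norm_add _ _

lemma ofReal_add_ne_zero_of_norm_lt (hu : ‖u‖ < a) : (a : ℂ) + u ≠ 0 := by
  intro h
  rw [eq_neg_of_add_eq_zero_right h, norm_neg, norm_real] at hu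
  exact (le_abs_self a).not_gt hu

lemma norm_inv_ofReal_add_mul_smul_le (ha : 0 < a) (hθ : θ < 1) (hu : ‖u‖ ≤ θ * a)
    (hu' : ‖u'‖ ≤ θ * a) (x : X) :
    ‖(((a : ℂ) + u) * ((a : ℂ) + u'))⁻¹ • x‖ ≤ ((1 - θ) ^ 2)⁻¹ * (‖x‖ / a ^ 2) := by
  have hpos : 0 < (1 - θ) * a := mul_pos (sub_pos.2 hθ) ha
  calc ‖(((a : ℂ) + u) * ((a : ℂ) + u'))⁻¹ • x‖
      = (‖(a : ℂ) + u‖ * ‖(a : ℂ) + u'‖)⁻¹ * ‖x‖ := by rw [norm_smul, norm_inv, norm_mul]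
    _ ≤ ((1 - θ) * a * ((1 - θ) * a))⁻¹ * ‖x‖ := by
        refine mul_le_mul_of_nonneg_right (inv_anti₀ (mul_pos hpos hpos) ?_) (norm_nonneg x)
        exact mul_le_mul (one_sub_mul_le_norm_ofReal_add hu) (one_sub_mul_le_norm_ofReal_add hu')
          hpos.le (norm_nonneg _)
    _ = ((1 - θ) ^ 2)⁻¹ * (‖x‖ / a ^ 2) := by
        rw [← sq, mul_pow, mul_inv, div_eq_inv_mul, mul_assoc]

end Bounds

lemma max_norm_pos {E : Type*} [NormedAddCommGroup E] {x y : E} (h : x ≠ 0 ∨ y ≠ 0) :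
    0 < max ‖x‖ ‖y‖ :=
  lt_max_iff.2 (h.imp norm_pos_iff.2 norm_pos_iff.2)

lemma exists_norm_eq_div_max_and_mul_eq_zero {w v : ℂ} (hwv : w ≠ 0 ∨ v ≠ 0) {a : ℝ}
    (ha : 0 ≤ a) :
    ∃ z : ℂ, ‖z‖ = a / max ‖w‖ ‖v‖ ∧ ((a : ℂ) + z * w) * ((a : ℂ) + z * v) = 0 := by
  have hmax : 0 < max ‖w‖ ‖v‖ := max_norm_pos hwv
  have hroot (p : ℂ) (hp : max ‖w‖ ‖v‖ = ‖p‖) :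
      ‖-(a : ℂ) / p‖ = a / max ‖w‖ ‖v‖ ∧ (a : ℂ) + -(a : ℂ) / p * p = 0 := by
    have hp0 : p ≠ 0 := norm_pos_iff.1 (hp ▸ hmax)
    rw [norm_div, norm_neg, norm_real, Real.norm_of_nonneg ha, hp, div_mul_cancel₀ _ hp0,
      add_neg_cancel]
    exact ⟨rfl, rfl⟩
  rcases max_choice ‖w‖ ‖v‖ with h | h
  · exact ⟨_, (hroot w h).1, mul_eq_zero_of_left (hroot w h).2 _⟩
  · exact ⟨_, (hroot v h).1, mul_eq_zero_of_right _ (hroot v h).2⟩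

lemma exists_isolated_min_of_tendsto_cofinite {ι : Type*} {l : ι → ℝ}
    (hl : Function.Injective l) (hltop : Tendsto l cofinite atTop) {s : Set ι}
    (hs : s.Nonempty) :
    ∃ m ∈ s, (∀ n ∈ s, l m ≤ l n) ∧ ∃ b > l m, ∀ n ∈ s, n ≠ m → b ≤ l n := by
  obtain ⟨m, hms, hmin⟩ := hltop.exists_within_forall_le hs
  refine ⟨m, hms, hmin, ?_⟩
  rcases (s \ {m}).eq_empty_or_nonempty with hempty | hnonempty
  · exact ⟨l m + 1, lt_add_one _, fun n hn hnm =>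
      (Set.eq_empty_iff_forall_notMem.1 hempty n ⟨hn, hnm⟩).elim⟩
  · obtain ⟨k, ⟨hks, hkm⟩, hk⟩ := hltop.exists_within_forall_le hnonempty
    exact ⟨l k, (hmin k hks).lt_of_ne fun h => hkm (hl h).symm, fun n hn hnm => hk n ⟨hn, hnm⟩⟩

/-- The series `∑ₙ cₙ / ((lₙ + z w) (lₙ + z v))` as a function of `z`; the paper's sum is its value
at `z = r` for `w = e^{iαπ}` and `v = e^{-iαπ}`. Terms whose denominator vanishes count as `0`. -/
noncomputable def resolventProductSum {ι X : Type*} [NormedAddCommGroup X] [NormedSpace ℂ X]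
    (w v : ℂ) (l : ι → ℝ) (c : ι → X) (z : ℂ) : X :=
  ∑' n, (((l n : ℂ) + z * w) * ((l n : ℂ) + z * v))⁻¹ • c n

namespace resolventProductSum

variable {ι X : Type*} [NormedAddCommGroup X] [NormedSpace ℂ X]
  {w v z : ℂ} {l : ι → ℝ} {c : ι → X} {a t : ℝ}

lemma denominator_ne_zero (hz : ‖z‖ * max ‖w‖ ‖v‖ < a) :
    ((a : ℂ) + z * w) * ((a : ℂ) + z * v) ≠ 0 := by
  have hfactor (p : ℂ) (hp : ‖p‖ ≤ max ‖w‖ ‖v‖) : (a : ℂ) + z * p ≠ 0 :=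
    ofReal_add_ne_zero_of_norm_lt <| (norm_mul_le_of_le le_rfl hp).trans_lt hz
  exact mul_ne_zero (hfactor w (le_max_left _ _)) (hfactor v (le_max_right _ _))

lemma norm_term_le (hta : t < a) (hl : ∀ n, c n ≠ 0 → a ≤ l n)
    (hz : ‖z‖ * max ‖w‖ ‖v‖ ≤ t) (n : ι) :
    ‖(((l n : ℂ) + z * w) * ((l n : ℂ) + z * v))⁻¹ • c n‖ ≤
      ((1 - t / a) ^ 2)⁻¹ * (‖c n‖ / l n ^ 2) := by
  by_cases hcn : c n = 0
  · simp only [hcn, smul_zero, norm_zero, zero_div, mul_zero, le_refl]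
  · have ht : 0 ≤ t := le_trans (by positivity) hz
    have ha : 0 < a := ht.trans_lt hta
    have hfactor (p : ℂ) (hp : ‖p‖ ≤ max ‖w‖ ‖v‖) : ‖z * p‖ ≤ t / a * l n :=
      calc ‖z * p‖ ≤ t := (norm_mul_le_of_le le_rfl hp).trans hz
        _ = t / a * a := (div_mul_cancel₀ t ha.ne').symm
        _ ≤ t / a * l n := by gcongr; exact hl n hcn
    exact norm_inv_ofReal_add_mul_smul_le (ha.trans_le (hl n hcn)) ((div_lt_one ha).2 hta)
      (hfactor w (le_max_left _ _)) (hfactor v (le_max_right _ _)) (c n)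

lemma differentiableAt_term (hl : ∀ n, c n ≠ 0 → a ≤ l n)
    (hz : ‖z‖ * max ‖w‖ ‖v‖ < a) (n : ι) :
    DifferentiableAt ℂ (fun z => (((l n : ℂ) + z * w) * ((l n : ℂ) + z * v))⁻¹ • c n) z := by
  by_cases hcn : c n = 0
  · simp only [hcn, smul_zero, differentiableAt_const]
  · have hden : DifferentiableAt ℂ (fun z => ((l n : ℂ) + z * w) * ((l n : ℂ) + z * v)) z := by
      fun_prop
    exact (hden.fun_inv (denominator_ne_zero (hz.trans_le (hl n hcn)))).smul_const (c n)

lemma eq_term_add_update [DecidableEq ι] (m : ι)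
    (h : Summable fun n => (((l n : ℂ) + z * w) * ((l n : ℂ) + z * v))⁻¹ • c n) :
    resolventProductSum w v l c z = (((l m : ℂ) + z * w) * ((l m : ℂ) + z * v))⁻¹ • c m +
      resolventProductSum w v l (Function.update c m 0) z := by
  rw [resolventProductSum, resolventProductSum, h.tsum_eq_add_tsum_ite m]
  simp only [Function.update_apply, smul_ite, smul_zero]

variable [CompleteSpace X]

lemma summable_term (hl : ∀ n, c n ≠ 0 → a ≤ l n)
    (hc : Summable fun n => ‖c n‖ / l n ^ 2) (hz : ‖z‖ * max ‖w‖ ‖v‖ < a) :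
    Summable fun n => (((l n : ℂ) + z * w) * ((l n : ℂ) + z * v))⁻¹ • c n :=
  .of_norm_bounded (hc.mul_left _) (norm_term_le hz hl le_rfl)

lemma differentiableAt (hl : ∀ n, c n ≠ 0 → a ≤ l n)
    (hc : Summable fun n => ‖c n‖ / l n ^ 2) (hz : ‖z‖ * max ‖w‖ ‖v‖ < a) :
    DifferentiableAt ℂ (resolventProductSum w v l c) z := by
  obtain ⟨t, hzt, hta⟩ := exists_between hz
  have hopen : IsOpen {y : ℂ | ‖y‖ * max ‖w‖ ‖v‖ < t} :=
    isOpen_lt (by fun_prop) continuous_const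
  have hdiff : DifferentiableOn ℂ (resolventProductSum w v l c)
      {y : ℂ | ‖y‖ * max ‖w‖ ‖v‖ < t} :=
    differentiableOn_tsum_of_summable_norm (hc.mul_left _)
      (fun n _ hy => (differentiableAt_term hl (hy.trans hta) n).differentiableWithinAt)
      hopen (fun n _ hy => norm_term_le hta hl hy.le n)
  exact hdiff.differentiableAt (hopen.mem_nhds hzt)

lemma differentiableAt_update [DecidableEq ι] {m : ι}
    (hl : ∀ n, c n ≠ 0 → n ≠ m → a ≤ l n) (hc : Summable fun n => ‖c n‖ / l n ^ 2)
    (hz : ‖z‖ * max ‖w‖ ‖v‖ < a) :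
    DifferentiableAt ℂ (resolventProductSum w v l (Function.update c m 0)) z := by
  refine differentiableAt (fun n hn => ?_) ?_ hz
  · have hnm : n ≠ m := by
      rintro rfl
      exact hn (Function.update_self _ _ _)
    exact hl n (by rwa [Function.update_of_ne hnm] at hn) hnm
  · refine (hc.update m 0).congr fun n => ?_
    by_cases hnm : n = m
    · rw [hnm, Function.update_self, Function.update_self, norm_zero, zero_div]
    · rw [Function.update_of_ne hnm, Function.update_of_ne hnm]

lemma not_eqOn_zero_ball [DecidableEq ι] {m : ι} (hwv : w ≠ 0 ∨ v ≠ 0) (hpos : 0 < l m)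
    (hmin : ∀ n, c n ≠ 0 → l m ≤ l n) (hc : Summable fun n => ‖c n‖ / l n ^ 2) (hm : c m ≠ 0)
    (hrest : ContinuousOn (resolventProductSum w v l (Function.update c m 0))
      (Metric.closedBall 0 (l m / max ‖w‖ ‖v‖))) :
    ¬ EqOn (resolventProductSum w v l c) 0 (Metric.ball 0 (l m / max ‖w‖ ‖v‖)) := by
  intro hzero
  have hmax : 0 < max ‖w‖ ‖v‖ := max_norm_pos hwv
  obtain ⟨z₀, hz₀, hroot⟩ := exists_norm_eq_div_max_and_mul_eq_zero hwv hpos.le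
  set R := l m / max ‖w‖ ‖v‖
  set den : ℂ → ℂ := fun z => ((l m : ℂ) + z * w) * ((l m : ℂ) + z * v)
  set rest : ℂ → X := resolventProductSum w v l (Function.update c m 0)
  have hball : EqOn (fun z => c m + den z • rest z) 0 (Metric.ball 0 R) := by
    intro z hz
    have hzlt : ‖z‖ * max ‖w‖ ‖v‖ < l m := (lt_div_iff₀ hmax).1 (mem_ball_zero_iff.1 hz)
    have hden : den z ≠ 0 := denominator_ne_zero hzlt
    calc c m + den z • rest z = den z • ((den z)⁻¹ • c m + rest z) := by
          rw [smul_add, smul_inv_smul₀ hden]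
      _ = den z • resolventProductSum w v l c z := by
          rw [eq_term_add_update m (summable_term hmin hc hzlt)]
      _ = 0 := by rw [hzero hz, Pi.zero_apply, smul_zero]
  have hclosedBall : EqOn (fun z => c m + den z • rest z) 0 (Metric.closedBall 0 R) :=
    hball.of_subset_closure (by fun_prop) continuousOn_const Metric.ball_subset_closedBall
      (closure_ball _ (div_pos hpos hmax).ne').ge
  have hz₀_eq : c m + den z₀ • rest z₀ = 0 := hclosedBall (mem_closedBall_zero_iff.2 hz₀.le)
  rw [show den z₀ = 0 from hroot, zero_smul, add_zero] at hz₀_eq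
  exact hm hz₀_eq

end resolventProductSum

theorem sum_nonvanishing_near_zero_general {ι X : Type*} [NormedAddCommGroup X] [NormedSpace ℂ X]
    [CompleteSpace X] {w v : ℂ} (hwv : w ≠ 0 ∨ v ≠ 0) {l : ι → ℝ} (hl : Function.Injective l)
    (hlpos : ∀ n, 0 < l n) (hltop : Tendsto l cofinite atTop) {c : ι → X}
    (hc : Summable fun n => ‖c n‖ / l n ^ 2) (hne : ∃ n₀, c n₀ ≠ 0) :
    ∀ᶠ z in 𝓝[≠] (0 : ℂ), resolventProductSum w v l c z ≠ 0 := by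
  classical
  obtain ⟨m, hm, hmin, b, hb, hgap⟩ :=
    exists_isolated_min_of_tendsto_cofinite hl hltop (s := {n | c n ≠ 0}) hne
  have hmax : 0 < max ‖w‖ ‖v‖ := max_norm_pos hwv
  set R := l m / max ‖w‖ ‖v‖
  have hanalytic : AnalyticOnNhd ℂ (resolventProductSum w v l c) (Metric.ball 0 R) :=
    DifferentiableOn.analyticOnNhd (fun z hz => (resolventProductSum.differentiableAt hmin hc
      ((lt_div_iff₀ hmax).1 (mem_ball_zero_iff.1 hz))).differentiableWithinAt)
      Metric.isOpen_ball
  have hrest : ContinuousOn (resolventProductSum w v l (Function.update c m 0))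
      (Metric.closedBall 0 R) := by
    intro z hz
    have hzb : ‖z‖ * max ‖w‖ ‖v‖ < b :=
      ((le_div_iff₀ hmax).1 (mem_closedBall_zero_iff.1 hz)).trans_lt hb
    exact (resolventProductSum.differentiableAt_update hgap hc hzb).continuousAt.continuousWithinAt
  by_contra hfreq
  exact resolventProductSum.not_eqOn_zero_ball hwv (hlpos m) hmin hc hm hrest <|
    hanalytic.eqOn_zero_of_preconnected_of_frequently_eq_zero (convex_ball _ _).isPreconnected
      (Metric.mem_ball_self (div_pos (hlpos m) hmax))
      ((not_eventually.1 hfreq).mono fun _ => not_not.1)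

/-- If not all coefficients `cₙ` vanish, then for every `ε > 0` there exists
`r ∈ (0, ε)` at which `∑ₙ cₙ/((λₙ + r e^{iαπ})(λₙ + r e^{-iαπ})) ≠ 0`. -/
theorem sum_nonvanishing_near_zero
    {X : Type*} [NormedAddCommGroup X] [NormedSpace ℂ X] [CompleteSpace X]
    (α : ℝ) (hα : α ∈ Ioo (0:ℝ) 1)
    (l : ℕ → ℝ) (hl : StrictMono l) (hlpos : ∀ n, 0 < l n)
    (hltop : Tendsto l atTop atTop)
    (c : ℕ → X) (hc : Summable (fun n => ‖c n‖ / (l n) ^ 2))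
    (hne : ∃ n₀, c n₀ ≠ 0) :
    ∀ ε : ℝ, 0 < ε → ∃ r ∈ Ioo (0:ℝ) ε,
      (∑' n, (((l n : ℂ) + (r : ℂ) * Complex.exp (Complex.I * (α : ℂ) * (Real.pi : ℂ))) *
        ((l n : ℂ) + (r : ℂ) * Complex.exp (-(Complex.I * (α : ℂ) * (Real.pi : ℂ)))))⁻¹ • c n)
        ≠ 0 := by
  intro ε hε
  have hcoe : Tendsto ((↑) : ℝ → ℂ) (𝓝[>] 0) (𝓝[≠] 0) :=
    continuous_ofReal.continuousWithinAt.tendsto_nhdsWithin fun _ hr => ofReal_ne_zero.2 hr.ne'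
  obtain ⟨r, hsum, hr⟩ := ((hcoe.eventually (sum_nonvanishing_near_zero_general
    (.inl (exp_ne_zero _)) hl.injective hlpos (Nat.cofinite_eq_atTop ▸ hltop) hc hne)).and
      (Ioo_mem_nhdsGT hε)).exists
  exact ⟨r, hr, hsum⟩
end

section
/- Let α ∈ (0,1), let (λₙ)_{n≥1} be a strictly increasing sequence of positive real numbers with λₙ → +∞, and let (cₙ)_{n≥1} be complex numbers with ∑ₙ |cₙ|/λₙ < ∞, not all equal to zero. Let S : ℂ → ℂ and G : ℂ → ℂ be entire functions such that G(p) = S(p)·∑ₙ cₙ/(λₙ + p^α) for every p ∈ ℂ∖(−∞,0]. Then S vanishes identically on ℂ. -/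
open Complex Set Filter
open scoped Topology ComplexConjugate
open Bornology (cobounded)

/-!
Write `F(z) = ∑ₙ cₙ / (λₙ + z)`, a meromorphic function with simple poles at the points `-λₙ`.
Approach a point `x < 0` from both sides of the cut: `G` and `S` have no jump there, whereas `p ^ α`
tends to `x ^ α` from above and to `ω * x ^ α` from below, with `ω = exp (-2πiα) ≠ 1`. Hence
`F (x ^ α) = F (ω * x ^ α)` wherever `S x ≠ 0`. If this happens for one `x`, it happens on an arc,
and the identity theorem gives `F z = F (ω * z)` for all `z`. The left-hand side has residue `cₙ` at
`-λₙ`, but the right-hand side is regular there, since `-ω * λₙ` is not a negative real number; so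
all `cₙ` vanish. Therefore `S` vanishes on the negative axis, hence everywhere.
-/

theorem countable_of_tendsto_cofinite_cobounded {ι E : Type*} [SeminormedAddGroup E] {a : ι → E}
    (ha : Tendsto a cofinite (cobounded E)) : Countable ι := by
  have hker : (fun n => ‖a n‖) ⁻¹' (atTop : Filter ℝ).ker = ∅ :=
    eq_empty_of_forall_notMem fun n hn => lt_irrefl ‖a n‖ (mem_ker.1 hn _ (Ioi_mem_atTop _))
  simpa [hker, countable_univ_iff] using
    (tendsto_norm_atTop_iff_cobounded.2 ha).countable_compl_preimage_ker

theorem ne_intCast_of_mem_Ioo_zero_one {α : ℝ} (hα : α ∈ Ioo (0 : ℝ) 1) (k : ℤ) : α ≠ k := by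
  rintro rfl
  have hk_pos : 0 < k := Int.cast_pos.1 hα.1
  have hk_lt : k < 1 := mod_cast hα.2
  lia

theorem norm_div_add_le {𝕜 : Type*} [NormedField 𝕜] {a z : 𝕜} (c : 𝕜) (h : 2 * ‖z‖ ≤ ‖a‖) :
    ‖c / (a + z)‖ ≤ 2 * (‖c‖ / ‖a‖) := by
  obtain rfl | ha := eq_or_ne a 0
  · obtain rfl : z = 0 := norm_le_zero_iff.1 (by linarith [norm_zero (E := 𝕜)])
    simp
  have hlower : ‖a‖ / 2 ≤ ‖a + z‖ := by linarith [norm_sub_le_norm_add a z]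
  calc ‖c / (a + z)‖ = ‖c‖ / ‖a + z‖ := norm_div _ _
    _ ≤ ‖c‖ / (‖a‖ / 2) := by gcongr
    _ = 2 * (‖c‖ / ‖a‖) := by field_simp

section PoleSeries

variable {ι : Type*} {a c : ι → ℂ} {z : ℂ}

/-- The Mittag-Leffler type series with poles `-a n` and residues `c n`. The sign convention is that
of the resolvent expansion `∑ₙ cₙ / (λₙ + p ^ α)`. -/
noncomputable def poleSeries (c a : ι → ℂ) (z : ℂ) : ℂ := ∑' n, c n / (a n + z)

/-- The points at which no term of `poleSeries c a` has a vanishing denominator. -/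
def poleFree (a : ι → ℂ) : Set ℂ := {z | ∀ n, a n + z ≠ 0}

theorem compl_poleFree (a : ι → ℂ) : (poleFree a)ᶜ = range fun n => -a n := by
  ext z
  simp [poleFree, add_eq_zero_iff_neg_eq]

theorem mem_poleFree_ofReal_of_im_ne_zero (l : ι → ℝ) (hz : z.im ≠ 0) :
    z ∈ poleFree fun n => (l n : ℂ) :=
  fun n h => hz (by simpa using congrArg im h)

theorem countable_compl_poleFree (ha : Tendsto a cofinite (cobounded ℂ)) :
    (poleFree a)ᶜ.Countable := by
  have := countable_of_tendsto_cofinite_cobounded ha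
  exact compl_poleFree a ▸ countable_range _

theorem summable_div_add (ha : Tendsto a cofinite (cobounded ℂ))
    (hc : Summable fun n => ‖c n‖ / ‖a n‖) (z : ℂ) : Summable fun n => c n / (a n + z) := by
  refine .of_norm_bounded_eventually (hc.mul_left 2) ?_
  filter_upwards [(tendsto_norm_atTop_iff_cobounded.2 ha).eventually_ge_atTop (2 * ‖z‖)] with n hn
  exact norm_div_add_le _ hn

theorem poleSeries_eq_sum_add (ha : Tendsto a cofinite (cobounded ℂ))
    (hc : Summable fun n => ‖c n‖ / ‖a n‖) (s : Finset ι) (z : ℂ) :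
    poleSeries c a z = ∑ n ∈ s, c n / (a n + z) +
      poleSeries (fun n : {n // n ∉ s} => c n) (fun n => a n) z :=
  ((summable_div_add ha hc z).sum_add_tsum_subtype_compl s).symm

theorem differentiableOn_poleSeries_ball {R : ℝ} (hR : ∀ n, 2 * R ≤ ‖a n‖)
    (hc : Summable fun n => ‖c n‖ / ‖a n‖) :
    DifferentiableOn ℂ (poleSeries c a) (Metric.ball 0 R) := by
  refine differentiableOn_tsum_of_summable_norm (hc.mul_left 2) (fun n => ?_) Metric.isOpen_ball
    fun n z hz => norm_div_add_le _ ?_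
  · refine (differentiableOn_const _).div (by fun_prop) fun z hz hzero => ?_
    have hnorm : ‖a n‖ = ‖z‖ := by rw [eq_neg_of_add_eq_zero_left hzero, norm_neg]
    linarith [hR n, mem_ball_zero_iff.1 hz, norm_nonneg z]
  · linarith [hR n, mem_ball_zero_iff.1 hz]

theorem analyticAt_poleSeries (ha : Tendsto a cofinite (cobounded ℂ))
    (hc : Summable fun n => ‖c n‖ / ‖a n‖) (hz : z ∈ poleFree a) :
    AnalyticAt ℂ (poleSeries c a) z := by
  have hfin : {n | ¬ 2 * (‖z‖ + 1) ≤ ‖a n‖}.Finite :=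
    (tendsto_norm_atTop_iff_cobounded.2 ha).eventually_ge_atTop _
  have hfar (n : {n // n ∉ hfin.toFinset}) : 2 * (‖z‖ + 1) ≤ ‖a n‖ := by
    simpa using n.2
  have htail : AnalyticAt ℂ
      (poleSeries (fun n : {n // n ∉ hfin.toFinset} => c n) (fun n => a n)) z :=
    (differentiableOn_poleSeries_ball hfar (hc.subtype _)).analyticAt
      (Metric.isOpen_ball.mem_nhds (by simp))
  have hhead : AnalyticAt ℂ (fun w => ∑ n ∈ hfin.toFinset, c n / (a n + w)) z :=
    Finset.analyticAt_fun_sum _ fun n _ =>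
      analyticAt_const.div (analyticAt_const.add analyticAt_id) (hz n)
  exact (hhead.add htail).congr (.of_forall fun w => (poleSeries_eq_sum_add ha hc _ w).symm)

theorem tendsto_add_mul_poleSeries (ha : Tendsto a cofinite (cobounded ℂ))
    (hinj : Function.Injective a) (hc : Summable fun n => ‖c n‖ / ‖a n‖) (n : ι) :
    Tendsto (fun z => (a n + z) * poleSeries c a z) (𝓝[≠] (-a n)) (𝓝 (c n)) := by
  classical
  set rest := poleSeries (fun m : {m // m ∉ ({n} : Finset ι)} => c m) (fun m => a m)
  have hfree : -a n ∈ poleFree fun m : {m // m ∉ ({n} : Finset ι)} => a m := fun m h =>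
    m.2 (by simpa using hinj (add_neg_eq_zero.1 h))
  have hrest : ContinuousAt rest (-a n) :=
    (analyticAt_poleSeries (ha.comp Subtype.val_injective.tendsto_cofinite)
      (hc.subtype _) hfree).continuousAt
  have hlim : Tendsto (fun z => c n + (a n + z) * rest z) (𝓝[≠] (-a n)) (𝓝 (c n)) := by
    have hcont : ContinuousAt (fun z => c n + (a n + z) * rest z) (-a n) := by fun_prop
    simpa using hcont.tendsto.mono_left nhdsWithin_le_nhds
  refine hlim.congr' ?_
  filter_upwards [self_mem_nhdsWithin] with z hz
  have hne : a n + z ≠ 0 := fun h => hz (eq_neg_of_add_eq_zero_right h)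
  rw [poleSeries_eq_sum_add ha hc {n}, Finset.sum_singleton, mul_add, mul_div_cancel₀ _ hne]

theorem coeff_eq_zero_of_frequently_poleSeries_eq (ha : Tendsto a cofinite (cobounded ℂ))
    (hinj : Function.Injective a) (hc : Summable fun n => ‖c n‖ / ‖a n‖)
    {g : ℂ → ℂ} {B : Set ℂ} (hB : B.Countable) (hg : AnalyticOnNhd ℂ g Bᶜ)
    (hz : z ∈ poleFree a) (hzB : z ∉ B) (heq : ∃ᶠ w in 𝓝[≠] z, poleSeries c a w = g w)
    {n : ι} (hgn : ContinuousAt g (-a n)) : c n = 0 := by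
  have hbad : ((poleFree a)ᶜ ∪ B).Countable := (countable_compl_poleFree ha).union hB
  set U := ((poleFree a)ᶜ ∪ B)ᶜ
  have hU {w : ℂ} : w ∈ U ↔ w ∈ poleFree a ∧ w ∉ B := by simp [U]
  have hconn : IsPreconnected U :=
    (hbad.isConnected_compl_of_one_lt_rank (by simp [rank_real_complex])).isPreconnected
  have heqOn : EqOn (poleSeries c a) g U :=
    AnalyticOnNhd.eqOn_of_preconnected_of_frequently_eq
      (fun w hw => analyticAt_poleSeries ha hc (hU.1 hw).1) (fun w hw => hg w (hU.1 hw).2)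
      hconn (hU.2 ⟨hz, hzB⟩) heq
  have : (𝓝[U] (-a n)).NeBot :=
    mem_closure_iff_nhdsWithin_neBot.1 (hbad.dense_compl ℝ (-a n))
  have hU_ne : U ⊆ {-a n}ᶜ := fun w hw h => (hU.1 hw).1 n (by rw [h, add_neg_cancel])
  have hresidue : Tendsto (fun w => (a n + w) * g w) (𝓝[U] (-a n)) (𝓝 (c n)) :=
    ((tendsto_add_mul_poleSeries ha hinj hc n).mono_left (nhdsWithin_mono _ hU_ne)).congr'
      (eventually_nhdsWithin_of_forall fun w hw => by rw [heqOn hw])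
  have hregular : Tendsto (fun w => (a n + w) * g w) (𝓝[U] (-a n)) (𝓝 0) := by
    have hcont : ContinuousAt (fun w => (a n + w) * g w) (-a n) := by fun_prop
    simpa using hcont.tendsto.mono_left nhdsWithin_le_nhds
  exact tendsto_nhds_unique hresidue hregular

theorem coeff_eq_zero_of_frequently_poleSeries_mul_eq (ha : Tendsto a cofinite (cobounded ℂ))
    (hinj : Function.Injective a) (hc : Summable fun n => ‖c n‖ / ‖a n‖) {ω : ℂ} (hω : ω ≠ 0)
    (hz : z ∈ poleFree a) (hωz : ω * z ∈ poleFree a)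
    (heq : ∃ᶠ w in 𝓝[≠] z, poleSeries c a w = poleSeries c a (ω * w))
    {n : ι} (hn : ω * -a n ∈ poleFree a) : c n = 0 := by
  have hdil {w : ℂ} (hw : ω * w ∈ poleFree a) :
      AnalyticAt ℂ (fun w => poleSeries c a (ω * w)) w :=
    (analyticAt_poleSeries ha hc hw).fun_comp (analyticAt_const.mul analyticAt_id)
  exact coeff_eq_zero_of_frequently_poleSeries_eq ha hinj hc
    ((countable_compl_poleFree ha).preimage (mul_right_injective₀ hω))
    (fun w hw => hdil (not_not.1 hw)) hz (not_not.2 hωz) heq (hdil hn).continuousAt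

end PoleSeries

section BranchCut

variable {x s : ℂ}

/-- The factor by which the boundary value of `p ^ s` on the negative real axis is multiplied when
the upper boundary value is replaced by the lower one. -/
noncomputable def cpowMonodromy (s : ℂ) : ℂ := exp (-(s * (2 * Real.pi * I)))

theorem cpowMonodromy_ne_zero (s : ℂ) : cpowMonodromy s ≠ 0 := exp_ne_zero _

theorem cpowMonodromy_eq_one_iff : cpowMonodromy s = 1 ↔ ∃ k : ℤ, s = k := by
  rw [cpowMonodromy, exp_neg, inv_eq_one, exp_eq_one_iff]
  simp only [mul_left_inj' two_pi_I_ne_zero]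

theorem norm_cpowMonodromy_ofReal (α : ℝ) : ‖cpowMonodromy α‖ = 1 := by
  simp [cpowMonodromy, norm_exp]

theorem tendsto_cpow_nhdsWithin_im_pos (hre : x.re < 0) (him : x.im = 0) (s : ℂ) :
    Tendsto (· ^ s) (𝓝[{z | 0 < z.im}] x) (𝓝 (x ^ s)) := by
  have hx : x ≠ 0 := by rintro rfl; simp at hre
  have hlog : Tendsto log (𝓝[{z | 0 < z.im}] x) (𝓝 (log x)) :=
    (continuousWithinAt_log_of_re_neg_of_im_zero hre him).mono fun z (hz : 0 < z.im) => hz.le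
  rw [cpow_def_of_ne_zero hx]
  refine ((continuous_exp.tendsto _).comp (hlog.mul_const s)).congr' ?_
  filter_upwards [nhdsWithin_le_nhds (eventually_ne_nhds hx)] with z hz
  exact (cpow_def_of_ne_zero hz s).symm

theorem tendsto_cpow_nhdsWithin_im_neg (hre : x.re < 0) (him : x.im = 0) (s : ℂ) :
    Tendsto (· ^ s) (𝓝[{z | z.im < 0}] x) (𝓝 (cpowMonodromy s * x ^ s)) := by
  have hx : x ≠ 0 := by rintro rfl; simp at hre
  have hlog : Tendsto log (𝓝[{z | z.im < 0}] x) (𝓝 (log x - 2 * Real.pi * I)) := by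
    convert tendsto_log_nhdsWithin_im_neg_of_re_neg_of_im_zero hre him using 2
    rw [log, arg_eq_pi_iff.2 ⟨hre, him⟩]
    ring
  have hlim : cpowMonodromy s * x ^ s = exp ((log x - 2 * Real.pi * I) * s) := by
    rw [cpowMonodromy, cpow_def_of_ne_zero hx, ← exp_add]
    ring_nf
  rw [hlim]
  refine ((continuous_exp.tendsto _).comp (hlog.mul_const s)).congr' ?_
  filter_upwards [nhdsWithin_le_nhds (eventually_ne_nhds hx)] with z hz
  exact (cpow_def_of_ne_zero hz s).symm

variable {F S G : ℂ → ℂ} {U : Set ℂ}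

theorem eq_mul_of_tendsto_cpow {V : Set ℂ} {w : ℂ} [(𝓝[V] x).NeBot] (hV : V ⊆ slitPlane)
    (hpow : Tendsto (· ^ s) (𝓝[V] x) (𝓝 w)) (hU : U ∈ 𝓝 w) (hF : ContinuousAt F w)
    (hS : ContinuousAt S x) (hG : ContinuousAt G x)
    (hGS : ∀ p ∈ slitPlane, p ^ s ∈ U → G p = S p * F (p ^ s)) : G x = S x * F w := by
  have hG_lim : Tendsto G (𝓝[V] x) (𝓝 (G x)) := hG.mono_left nhdsWithin_le_nhds
  have hSF_lim : Tendsto (fun p => S p * F (p ^ s)) (𝓝[V] x) (𝓝 (S x * F w)) :=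
    (hS.mono_left nhdsWithin_le_nhds).mul (hF.tendsto.comp hpow)
  refine tendsto_nhds_unique hG_lim (hSF_lim.congr' ?_)
  filter_upwards [self_mem_nhdsWithin, hpow hU] with p hpV hpU
  exact (hGS p (hV hpV) hpU).symm

theorem eq_apply_cpowMonodromy_mul_of_ne_zero (hre : x.re < 0) (him : x.im = 0)
    (hU : U ∈ 𝓝 (x ^ s)) (hF : ContinuousAt F (x ^ s))
    (hU' : U ∈ 𝓝 (cpowMonodromy s * x ^ s)) (hF' : ContinuousAt F (cpowMonodromy s * x ^ s))
    (hS : ContinuousAt S x) (hG : ContinuousAt G x)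
    (hGS : ∀ p ∈ slitPlane, p ^ s ∈ U → G p = S p * F (p ^ s)) (hSx : S x ≠ 0) :
    F (x ^ s) = F (cpowMonodromy s * x ^ s) := by
  have : (𝓝[{z : ℂ | 0 < z.im}] x).NeBot :=
    mem_closure_iff_nhdsWithin_neBot.1 (closure_setOfPred_lt_im 0 ▸ him.ge)
  have : (𝓝[{z : ℂ | z.im < 0}] x).NeBot :=
    mem_closure_iff_nhdsWithin_neBot.1 (closure_setOfPred_im_lt 0 ▸ him.le)
  have hupper : G x = S x * F (x ^ s) :=
    eq_mul_of_tendsto_cpow (V := {z | 0 < z.im}) (fun z (hz : 0 < z.im) => .inr hz.ne')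
      (tendsto_cpow_nhdsWithin_im_pos hre him s) hU hF hS hG hGS
  have hlower : G x = S x * F (cpowMonodromy s * x ^ s) :=
    eq_mul_of_tendsto_cpow (V := {z | z.im < 0}) (fun z (hz : z.im < 0) => .inr hz.ne)
      (tendsto_cpow_nhdsWithin_im_neg hre him s) hU' hF' hS hG hGS
  exact mul_left_cancel₀ hSx (hupper.symm.trans hlower)

end BranchCut

section NegativeAxis

theorem neg_exp_cpow (t : ℝ) (s : ℂ) : (-exp t) ^ s = exp (s * (t + Real.pi * I)) := by
  have hexp : -exp t = exp (t + Real.pi * I) := by rw [exp_add, exp_pi_mul_I, mul_neg_one]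
  have hlog : log (exp (t + Real.pi * I)) = t + Real.pi * I :=
    log_exp (by simpa using by linarith [Real.pi_pos]) (by simp)
  rw [hexp, cpow_def_of_ne_zero (exp_ne_zero _), hlog, mul_comm]

theorem im_neg_exp_cpow (t α : ℝ) :
    ((-exp t) ^ (α : ℂ)).im = Real.exp (α * t) * Real.sin (α * Real.pi) := by
  simp [neg_exp_cpow, exp_im]

theorem cpowMonodromy_mul_neg_exp_cpow (t α : ℝ) :
    cpowMonodromy α * (-exp t) ^ (α : ℂ) = conj ((-exp t) ^ (α : ℂ)) := by
  rw [neg_exp_cpow, cpowMonodromy, ← exp_conj, ← exp_add]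
  simp only [map_mul, map_add, conj_ofReal, conj_I]
  ring_nf

theorem im_neg_exp_cpow_ne_zero {α : ℝ} (hα : ∀ k : ℤ, α ≠ k) (t : ℝ) :
    ((-exp t) ^ (α : ℂ)).im ≠ 0 := by
  rw [im_neg_exp_cpow]
  refine mul_ne_zero (Real.exp_ne_zero _) fun hsin => ?_
  obtain ⟨k, hk⟩ := Real.sin_eq_zero_iff.1 hsin
  exact hα k (mul_right_cancel₀ Real.pi_ne_zero hk).symm

theorem im_cpowMonodromy_mul_neg_exp_cpow_ne_zero {α : ℝ} (hα : ∀ k : ℤ, α ≠ k) (t : ℝ) :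
    (cpowMonodromy α * (-exp t) ^ (α : ℂ)).im ≠ 0 := by
  rw [cpowMonodromy_mul_neg_exp_cpow, conj_im]
  exact neg_ne_zero.2 (im_neg_exp_cpow_ne_zero hα t)

theorem tendsto_neg_exp_cpow_nhdsNE {s : ℂ} (hs : s ≠ 0) (t : ℝ) :
    Tendsto (fun u : ℝ => (-exp u) ^ s) (𝓝[≠] t) (𝓝[≠] ((-exp t) ^ s)) := by
  simp only [neg_exp_cpow]
  have hderiv : HasDerivAt (fun u : ℝ => exp (s * (u + Real.pi * I)))
      (exp (s * (t + Real.pi * I)) * (s * 1)) t :=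
    (((hasDerivAt_id t).ofReal_comp.add_const _).const_mul s).cexp
  exact hderiv.tendsto_nhdsNE (mul_ne_zero (exp_ne_zero _) (by simpa using hs))

theorem eq_zero_of_forall_neg_exp {S : ℂ → ℂ} (hS : Differentiable ℂ S)
    (hzero : ∀ t : ℝ, S (-exp t) = 0) : S = 0 := by
  have haccum : Tendsto (fun t : ℝ => -exp t) (𝓝[≠] 0) (𝓝[≠] (-exp (0 : ℝ))) := by
    simpa using tendsto_neg_exp_cpow_nhdsNE one_ne_zero 0
  exact AnalyticOnNhd.eq_of_frequently_eq (fun z _ => hS.analyticAt z) (fun _ _ => analyticAt_const)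
    (haccum.frequently (Frequently.of_forall hzero))

variable {ι : Type*} {α : ℝ} {l : ι → ℝ} {c : ι → ℂ} {S G : ℂ → ℂ}

theorem cpowMonodromy_mul_neg_mem_poleFree (hα : ∀ k : ℤ, α ≠ k) (hlpos : ∀ n, 0 < l n) (n : ι) :
    cpowMonodromy α * -(l n : ℂ) ∈ poleFree fun n => (l n : ℂ) := by
  intro m h
  have heq : cpowMonodromy α * l n = l m := by linear_combination -h
  have hlen : l n = l m := by
    simpa [norm_cpowMonodromy_ofReal, abs_of_pos (hlpos _)] using congrArg norm heq
  have hln : (l n : ℂ) ≠ 0 := ofReal_ne_zero.2 (hlpos n).ne'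
  have hone : cpowMonodromy α = 1 := (mul_eq_right₀ hln).1 (heq.trans (by rw [hlen]))
  obtain ⟨k, hk⟩ := cpowMonodromy_eq_one_iff.1 hone
  exact hα k (mod_cast hk)

theorem tendsto_ofReal_cobounded {f : Filter ι} (hl : Tendsto l f atTop) :
    Tendsto (fun n => (l n : ℂ)) f (cobounded ℂ) := by
  have hnorm : Tendsto (fun n => ‖l n‖) f atTop := tendsto_norm_atTop_atTop.comp hl
  exact tendsto_norm_atTop_iff_cobounded.1 (by simpa only [norm_real] using hnorm)

theorem poleSeries_neg_exp_cpow_eq (hα : ∀ k : ℤ, α ≠ k) (hl : Tendsto l cofinite atTop)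
    (hc : Summable fun n => ‖c n‖ / ‖(l n : ℂ)‖) (hS : Continuous S) (hG : Continuous G)
    (hGS : ∀ p ∈ slitPlane, p ^ (α : ℂ) ∈ poleFree (fun n => (l n : ℂ)) →
      G p = S p * poleSeries c (fun n => (l n : ℂ)) (p ^ (α : ℂ)))
    {t : ℝ} (ht : S (-exp t) ≠ 0) :
    poleSeries c (fun n => (l n : ℂ)) ((-exp t) ^ (α : ℂ)) =
      poleSeries c (fun n => (l n : ℂ)) (cpowMonodromy α * (-exp t) ^ (α : ℂ)) := by
  have hnhds {w : ℂ} (hw : w.im ≠ 0) : {w : ℂ | w.im ≠ 0} ∈ 𝓝 w :=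
    (isOpen_ne_fun continuous_im continuous_const).mem_nhds hw
  have hcont {w : ℂ} (hw : w.im ≠ 0) : ContinuousAt (poleSeries c fun n => (l n : ℂ)) w :=
    (analyticAt_poleSeries (tendsto_ofReal_cobounded hl) hc
      (mem_poleFree_ofReal_of_im_ne_zero l hw)).continuousAt
  have hupper := im_neg_exp_cpow_ne_zero hα t
  have hlower := im_cpowMonodromy_mul_neg_exp_cpow_ne_zero hα t
  refine eq_apply_cpowMonodromy_mul_of_ne_zero ?_ ?_ (hnhds hupper) (hcont hupper)
    (hnhds hlower) (hcont hlower) hS.continuousAt hG.continuousAt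
    (fun p hp hpow => hGS p hp (mem_poleFree_ofReal_of_im_ne_zero l hpow)) ht
  · simpa [exp_ofReal_re] using Real.exp_pos t
  · simp [exp_ofReal_im]

theorem apply_neg_exp_eq_zero_of_eq_mul_poleSeries (hα : ∀ k : ℤ, α ≠ k)
    (hinj : Function.Injective l) (hlpos : ∀ n, 0 < l n) (hl : Tendsto l cofinite atTop)
    (hc : Summable fun n => ‖c n‖ / ‖(l n : ℂ)‖) (hne : ∃ n, c n ≠ 0)
    (hS : Continuous S) (hG : Continuous G)
    (hGS : ∀ p ∈ slitPlane, p ^ (α : ℂ) ∈ poleFree (fun n => (l n : ℂ)) →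
      G p = S p * poleSeries c (fun n => (l n : ℂ)) (p ^ (α : ℂ)))
    (t : ℝ) : S (-exp t) = 0 := by
  by_contra hSt
  obtain ⟨n, hn⟩ := hne
  have hS_near : ∀ᶠ u : ℝ in 𝓝[≠] t, S (-exp u) ≠ 0 := by
    have hcont : Continuous fun u : ℝ => S (-exp u) := by fun_prop
    exact nhdsWithin_le_nhds (hcont.continuousAt.eventually_ne hSt)
  have hα0 : (α : ℂ) ≠ 0 := by simpa using hα 0
  have hfreq : ∃ᶠ w in 𝓝[≠] ((-exp t) ^ (α : ℂ)), poleSeries c (fun n => (l n : ℂ)) w =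
      poleSeries c (fun n => (l n : ℂ)) (cpowMonodromy α * w) :=
    (tendsto_neg_exp_cpow_nhdsNE hα0 t).frequently
      (hS_near.mono fun u hu => poleSeries_neg_exp_cpow_eq hα hl hc hS hG hGS hu).frequently
  exact hn (coeff_eq_zero_of_frequently_poleSeries_mul_eq (tendsto_ofReal_cobounded hl)
    (ofReal_injective.comp hinj) hc (cpowMonodromy_ne_zero _)
    (mem_poleFree_ofReal_of_im_ne_zero l (im_neg_exp_cpow_ne_zero hα t))
    (mem_poleFree_ofReal_of_im_ne_zero l (im_cpowMonodromy_mul_neg_exp_cpow_ne_zero hα t))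
    hfreq (cpowMonodromy_mul_neg_mem_poleFree hα hlpos n))

end NegativeAxis

theorem time_component_vanishes_general {ι : Type*} {α : ℝ} (hα : ∀ k : ℤ, α ≠ k)
    {l : ι → ℝ} (hinj : Function.Injective l) (hlpos : ∀ n, 0 < l n)
    (hl : Tendsto l cofinite atTop)
    {c : ι → ℂ} (hc : Summable fun n => ‖c n‖ / l n) (hne : ∃ n, c n ≠ 0)
    {S : ℂ → ℂ} (hS : Differentiable ℂ S) {G : ℂ → ℂ} (hG : Continuous G)
    (hGS : ∀ p ∈ slitPlane, (∀ n, (l n : ℂ) + p ^ (α : ℂ) ≠ 0) →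
      G p = S p * ∑' n, c n / ((l n : ℂ) + p ^ (α : ℂ))) :
    ∀ p : ℂ, S p = 0 := by
  have hc' : Summable fun n => ‖c n‖ / ‖(l n : ℂ)‖ := by
    simpa only [norm_real, Real.norm_of_nonneg (hlpos _).le] using hc
  have haxis : ∀ t : ℝ, S (-exp t) = 0 :=
    apply_neg_exp_eq_zero_of_eq_mul_poleSeries hα hinj hlpos hl hc' hne hS.continuous hG hGS
  exact congrFun (eq_zero_of_forall_neg_exp hS haxis)

/-- If the coefficients `cₙ` are not all zero and `S`, `G` are entire
functions with `G(p) = S(p) ∑ₙ cₙ/(λₙ + p^α)` on the cut plane, then `S ≡ 0`. -/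
theorem time_component_vanishes
    (α : ℝ) (hα : α ∈ Ioo (0:ℝ) 1)
    (l : ℕ → ℝ) (hl : StrictMono l) (hlpos : ∀ n, 0 < l n)
    (hltop : Tendsto l atTop atTop)
    (c : ℕ → ℂ) (hc : Summable (fun n => ‖c n‖ / l n))
    (hne : ∃ n₀, c n₀ ≠ 0)
    (S : ℂ → ℂ) (hS : Differentiable ℂ S)
    (G : ℂ → ℂ) (hG : Differentiable ℂ G)
    (hGS : ∀ p ∈ Complex.slitPlane,
      G p = S p * ∑' n, c n / ((l n : ℂ) + p ^ (α : ℂ))) :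
    ∀ p : ℂ, S p = 0 := by
  exact time_component_vanishes_general (ne_intCast_of_mem_Ioo_zero_one hα) hl.injective hlpos
    (Nat.cofinite_eq_atTop ▸ hltop) hc hne hS hG.continuous fun p hp _ => hGS p hp
end

section
/- Let X be a complex Banach space, let B : X → X be a bounded linear operator, let x ∈ X, let ℓ : X → ℂ be a continuous linear functional, let α ∈ (0,1), and let δ > 0 satisfy δ·‖B‖ < 1. Then the following two conditions are equivalent: (i) there exists ε ∈ (0, δ] such that ℓ((I + z e^{iαπ} B)⁻¹ (I + z e^{−iαπ} B)⁻¹ x) = 0 for every z ∈ ℂ with |z| < ε; (ii) ℓ(Bⁿ x) = 0 for every integer n ≥ 0 such that α(n+1) is not a positive integer. -/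
open Complex

/-! The Cauchy product of two Neumann series gives
`(1 + z u b)⁻¹ (1 + z v b)⁻¹ = ∑ₙ (-z)ⁿ hₙ(u, v) bⁿ` with `hₙ(u, v) = ∑_{k ≤ n} uᵏ vⁿ⁻ᵏ`.
By uniqueness of power series coefficients, a continuous linear map `φ` kills the left side for all
small `z` iff `hₙ(u, v) φ(bⁿ) = 0` for every `n`. For `u = e^{iαπ}`, `v = e^{-iαπ}` and
`α ∉ ℤ` one has `hₙ(u, v) = (uⁿ⁺¹ - vⁿ⁺¹) / (u - v) = sin((n + 1)απ) / sin(απ)`, which vanishes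
exactly when `α(n + 1)` is an integer. -/

theorem eq_zero_of_forall_norm_lt_hasSum_pow_smul_zero
    {𝕜 E : Type*} [NontriviallyNormedField 𝕜] [NormedAddCommGroup E] [NormedSpace 𝕜 E]
    {c : ℕ → E} {ε : ℝ} (hε : 0 < ε)
    (hc : ∀ z : 𝕜, ‖z‖ < ε → HasSum (fun n ↦ z ^ n • c n) 0) : c = 0 := by
  let p : FormalMultilinearSeries 𝕜 𝕜 E := fun n ↦ ContinuousMultilinearMap.mkPiRing 𝕜 (Fin n) (c n)
  have coeff_p (n : ℕ) : p.coeff n = c n := by simp [p, FormalMultilinearSeries.coeff]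
  have hp : HasFPowerSeriesAt (0 : 𝕜 → E) p 0 := by
    rw [hasFPowerSeriesAt_iff]
    filter_upwards [Metric.ball_mem_nhds 0 hε] with z hz
    simpa only [coeff_p, zero_add, Pi.zero_apply] using hc z (mem_ball_zero_iff.mp hz)
  funext n
  rw [← coeff_p n, hp.eq_zero]
  simp [FormalMultilinearSeries.coeff]

theorem hasSum_inverse_one_sub_mul_inverse_one_sub
    {R : Type*} [NormedRing R] [HasSummableGeomSeries R] {a b : R} (ha : ‖a‖ < 1) (hb : ‖b‖ < 1) :
    HasSum (fun n ↦ ∑ k ∈ Finset.range (n + 1), a ^ k * b ^ (n - k))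
      (Ring.inverse (1 - a) * Ring.inverse (1 - b)) := by
  simpa only [geom_series_eq_inverse a ha, geom_series_eq_inverse b hb] using
    hasSum_sum_range_mul_of_summable_norm'
      (summable_norm_geometric_of_norm_lt_one ha) (summable_geometric_of_norm_lt_one ha)
      (summable_norm_geometric_of_norm_lt_one hb) (summable_geometric_of_norm_lt_one hb)

theorem hasSum_inverse_one_add_smul_mul_inverse_one_add_smul
    {𝕜 A : Type*} [NormedField 𝕜] [NormedRing A] [NormedAlgebra 𝕜 A] [HasSummableGeomSeries A]
    {b : A} {u v z : 𝕜}
    (hu : ‖(z * u) • b‖ < 1) (hv : ‖(z * v) • b‖ < 1) :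
    HasSum (fun n ↦ (-z) ^ n • (∑ k ∈ Finset.range (n + 1), u ^ k * v ^ (n - k)) • b ^ n)
      (Ring.inverse (1 + (z * u) • b) * Ring.inverse (1 + (z * v) • b)) := by
  have cauchy := hasSum_inverse_one_sub_mul_inverse_one_sub
    ((norm_neg _).trans_lt hu) ((norm_neg _).trans_lt hv)
  rw [sub_neg_eq_add, sub_neg_eq_add] at cauchy
  convert cauchy using 2 with n
  rw [Finset.sum_smul, Finset.smul_sum]
  refine Finset.sum_congr rfl fun k hk ↦ ?_
  obtain ⟨m, rfl⟩ := Nat.exists_eq_add_of_le (Finset.mem_range_succ_iff.mp hk)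
  simp only [← neg_smul, ← neg_mul, smul_pow, smul_mul_smul_comm, ← pow_add, smul_smul,
    add_tsub_cancel_left]
  congr 1
  ring

theorem evaluation_vanishing_iff_moments_vanish_general
    {𝕜 A E : Type*} [NontriviallyNormedField 𝕜] [NormedRing A] [NormedAlgebra 𝕜 A]
    [HasSummableGeomSeries A] [NormedAddCommGroup E] [NormedSpace 𝕜 E]
    (b : A) (φ : A →L[𝕜] E) (u v : 𝕜)
    {δ : ℝ} (hδ : 0 < δ) (hu : δ * ‖u • b‖ < 1) (hv : δ * ‖v • b‖ < 1) :
    (∃ ε : ℝ, 0 < ε ∧ ε ≤ δ ∧ ∀ z : 𝕜, ‖z‖ < ε →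
      φ (Ring.inverse (1 + (z * u) • b) * Ring.inverse (1 + (z * v) • b)) = 0)
    ↔ ∀ n : ℕ, ∑ k ∈ Finset.range (n + 1), u ^ k * v ^ (n - k) ≠ 0 → φ (b ^ n) = 0 := by
  have norm_lt_one {w z : 𝕜} (hw : δ * ‖w • b‖ < 1) (hz : ‖z‖ < δ) : ‖(z * w) • b‖ < 1 := by
    rw [mul_smul, norm_smul]
    exact (mul_le_mul_of_nonneg_right hz.le (norm_nonneg _)).trans_lt hw
  have expansion {z : 𝕜} (hz : ‖z‖ < δ) :
      HasSum (fun n ↦ (-z) ^ n • (∑ k ∈ Finset.range (n + 1), u ^ k * v ^ (n - k)) • φ (b ^ n))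
        (φ (Ring.inverse (1 + (z * u) • b) * Ring.inverse (1 + (z * v) • b))) := by
    simpa only [map_smul] using (hasSum_inverse_one_add_smul_mul_inverse_one_add_smul
      (norm_lt_one hu hz) (norm_lt_one hv hz)).mapL φ
  constructor
  · rintro ⟨ε, hε, hεδ, hφ⟩ n hn
    have coeff_eq_zero := eq_zero_of_forall_norm_lt_hasSum_pow_smul_zero hε fun (z : 𝕜) hz ↦ by
      have hz_neg : ‖-z‖ < ε := by rwa [norm_neg]
      simpa only [neg_neg, hφ _ hz_neg] using expansion (hz_neg.trans_le hεδ)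
    exact (smul_eq_zero.mp (congrFun coeff_eq_zero n)).resolve_left hn
  · refine fun hφ ↦ ⟨δ, hδ, le_rfl, fun z hz ↦ (expansion hz).unique ?_⟩
    convert hasSum_zero with n
    rw [smul_eq_zero_of_right _ (smul_eq_zero.mpr (or_iff_not_imp_left.mpr (hφ n)))]

theorem sum_range_pow_mul_pow_eq_zero_iff {K : Type*} [Field K] {u v : K} (huv : u ≠ v) (n : ℕ) :
    ∑ k ∈ Finset.range (n + 1), u ^ k * v ^ (n - k) = 0 ↔ u ^ (n + 1) = v ^ (n + 1) := by
  have closed_form : ∑ k ∈ Finset.range (n + 1), u ^ k * v ^ (n - k) =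
      (u ^ (n + 1) - v ^ (n + 1)) / (u - v) := by
    simpa only [add_tsub_cancel_right] using geom₂_sum huv (n + 1)
  rw [closed_form, div_eq_zero_iff, or_iff_left (sub_ne_zero.mpr huv), sub_eq_zero]

theorem exp_I_mul_pi_eq_exp_neg_iff_exists_int (t : ℂ) :
    exp (I * t * Real.pi) = exp (-(I * t * Real.pi)) ↔ ∃ m : ℤ, t = m := by
  rw [exp_eq_exp_iff_exists_int]
  refine exists_congr fun m ↦ ?_
  have factor : I * t * Real.pi - (-(I * t * Real.pi) + m * (2 * Real.pi * I)) =
      2 * Real.pi * I * (t - m) := by ring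
  rw [← sub_eq_zero, factor, mul_eq_zero_iff_left two_pi_I_ne_zero, sub_eq_zero]

theorem exp_I_mul_pi_pow_eq_exp_neg_pow_iff_exists_int (t : ℂ) (n : ℕ) :
    exp (I * t * Real.pi) ^ n = exp (-(I * t * Real.pi)) ^ n ↔ ∃ m : ℤ, t * n = m := by
  rw [← exp_I_mul_pi_eq_exp_neg_iff_exists_int, ← exp_nat_mul, ← exp_nat_mul]
  ring_nf

theorem sum_range_exp_pow_mul_exp_neg_pow_eq_zero_iff_exists_int {t : ℂ}
    (ht : ¬∃ m : ℤ, t = m) (n : ℕ) :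
    ∑ k ∈ Finset.range (n + 1), exp (I * t * Real.pi) ^ k * exp (-(I * t * Real.pi)) ^ (n - k) = 0
    ↔ ∃ m : ℤ, t * (n + 1 : ℕ) = m := by
  rw [sum_range_pow_mul_pow_eq_zero_iff (mt (exp_I_mul_pi_eq_exp_neg_iff_exists_int t).mp ht),
    exp_I_mul_pi_pow_eq_exp_neg_pow_iff_exists_int]

theorem exists_int_eq_iff_exists_pos_nat_eq {R : Type*} [Ring R] [PartialOrder R]
    [IsStrictOrderedRing R] {r : R} (hr : 0 < r) :
    (∃ m : ℤ, r = m) ↔ ∃ m : ℕ, 0 < m ∧ r = m := by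
  constructor
  · rintro ⟨m, rfl⟩
    have hm : 0 < m := Int.cast_pos.mp hr
    lift m to ℕ using hm.le
    exact ⟨m, Int.natCast_pos.mp hm, Int.cast_natCast m⟩
  · rintro ⟨m, -, rfl⟩
    exact ⟨m, (Int.cast_natCast m).symm⟩

theorem sum_range_exp_pow_mul_exp_neg_pow_eq_zero_iff_exists_pos_nat
    {α : ℝ} (hα : α ∈ Set.Ioo (0 : ℝ) 1) (n : ℕ) :
    ∑ k ∈ Finset.range (n + 1), exp (I * α * Real.pi) ^ k * exp (-(I * α * Real.pi)) ^ (n - k) = 0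
    ↔ ∃ m : ℕ, 0 < m ∧ α * (n + 1) = m := by
  obtain ⟨α_pos, α_lt_one⟩ := hα
  have α_not_int : ¬∃ m : ℤ, (α : ℂ) = m := by
    rintro ⟨m, hm⟩
    obtain rfl : α = m := mod_cast hm
    have : 0 < m := Int.cast_pos.mp α_pos
    have : m < 1 := mod_cast α_lt_one
    omega
  rw [sum_range_exp_pow_mul_exp_neg_pow_eq_zero_iff_exists_int α_not_int,
    ← exists_int_eq_iff_exists_pos_nat_eq (by positivity)]
  norm_cast

/-- Operator-theoretic formulation of Step 1 in the proof of Theorem 1.3: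
`ℓ((I + z e^{iαπ}B)⁻¹(I + z e^{-iαπ}B)⁻¹ x)` vanishes for all small `z` iff
`ℓ(Bⁿx) = 0` for every `n ≥ 0` with `α(n+1)` not a positive integer. -/
theorem evaluation_vanishing_iff_moments_vanish
    {X : Type*} [NormedAddCommGroup X] [NormedSpace ℂ X] [CompleteSpace X]
    (B : X →L[ℂ] X) (x : X) (ℓ : X →L[ℂ] ℂ)
    (α : ℝ) (hα : α ∈ Set.Ioo (0:ℝ) 1)
    (δ : ℝ) (hδ : 0 < δ) (hδB : δ * ‖B‖ < 1) :
    (∃ ε : ℝ, 0 < ε ∧ ε ≤ δ ∧ ∀ z : ℂ, ‖z‖ < ε →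
      ℓ ((Ring.inverse (1 + (z * Complex.exp (Complex.I * (α : ℂ) * (Real.pi : ℂ))) • B) *
          Ring.inverse (1 + (z * Complex.exp (-(Complex.I * (α : ℂ) * (Real.pi : ℂ)))) • B)) x)
        = 0)
    ↔ (∀ n : ℕ, ¬ (∃ m : ℕ, 0 < m ∧ α * (n + 1) = m) → ℓ ((B ^ n) x) = 0) := by
  simpa [sum_range_exp_pow_mul_exp_neg_pow_eq_zero_iff_exists_pos_nat hα] using
    evaluation_vanishing_iff_moments_vanish_general B (ℓ.comp (ContinuousLinearMap.apply ℂ X x))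
      (exp (I * α * Real.pi)) (exp (-(I * α * Real.pi))) hδ
      (by simpa [norm_smul, norm_exp] using hδB) (by simpa [norm_smul, norm_exp] using hδB)
end
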